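/- arXiv:2212.13943 — 11 statements merged into one kernel-verified Lean document; each statement's English description precedes it below -/
import Mathlib

section
/- Let Δv > 0, let f : ℤ → ℝ be finitely supported, and let n, ũ, T̃ ∈ ℝ satisfy the discrete moment relations n = Δv·∑_{j∈ℤ} f_j, n·ũ = Δv·∑_{j∈ℤ} v_{j+1/2} f_{j+1/2}, and n·T̃ = Δv·∑_{j∈ℤ} (v_{j+1/2} − ũ)² f_{j+1/2}. Then the second-order discrete Fokker–Planck operator Q satisfies Δv·∑_{j∈ℤ} Q_j = 0, Δv·∑_{j∈ℤ} v_j Q_j = 0, and Δv·∑_{j∈ℤ} (v_j²/2) Q_j = 0 (discrete conservation of mass, momentum and kinetic energy). -/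
noncomputable section

/-- Grid points `v_j = j·Δv`. -/
def vgrid (Δv : ℝ) (j : ℤ) : ℝ := j * Δv

/-- Half-grid average `f_{j+1/2} = (f_j + f_{j+1})/2`. -/
def fhalf (f : ℤ → ℝ) (j : ℤ) : ℝ := (f j + f (j + 1)) / 2

/-- Half-grid point `v_{j+1/2} = (v_j + v_{j+1})/2`. -/
def vhalf (Δv : ℝ) (j : ℤ) : ℝ := (vgrid Δv j + vgrid Δv (j + 1)) / 2

/-- Second-order discrete Fokker–Planck operator
`Q_j = (1/Δv)[f_{j+1/2}(v_{j+1/2}−ũ) − f_{j−1/2}(v_{j−1/2}−ũ)] + (T̃/Δv²)(f_{j+1}−2f_j+f_{j−1})`. -/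
def Qdisc (Δv ut Tt : ℝ) (f : ℤ → ℝ) (j : ℤ) : ℝ :=
  (1 / Δv) * (fhalf f j * (vhalf Δv j - ut) - fhalf f (j - 1) * (vhalf Δv (j - 1) - ut))
    + (Tt / Δv ^ 2) * (f (j + 1) - 2 * f j + f (j - 1))

theorem hs_shift {g : ℤ → ℝ} {a : ℝ} (h : HasSum g a) : HasSum (fun j => g (j - 1)) a :=
  (Equiv.subRight (1 : ℤ)).hasSum_iff.mpr h

theorem hs_shift' {g : ℤ → ℝ} {a : ℝ} (h : HasSum g a) : HasSum (fun j => g (j + 1)) a :=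
  (Equiv.addRight (1 : ℤ)).hasSum_iff.mpr h

theorem hs_congr {g k : ℤ → ℝ} {a b : ℝ} (h : HasSum g a) (h1 : ∀ j, k j = g j) (h2 : b = a) :
    HasSum k b := by
  rw [h2, funext h1]; exact h

theorem hs_tele {g : ℤ → ℝ} (h : Summable g) : HasSum (fun j => g j - g (j - 1)) 0 := by
  have := h.hasSum.sub (hs_shift h.hasSum)
  simpa using this

theorem sm_mul {f : ℤ → ℝ} (hf : (Function.support f).Finite) (w : ℤ → ℝ) :
    Summable (fun j => w j * f j) := by
  apply summable_of_hasFiniteSupport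
  apply hf.subset
  intro j hj h0
  apply hj
  simp [h0]

theorem fin_shift {f : ℤ → ℝ} (hf : (Function.support f).Finite) :
    (Function.support (fun j => f (j + 1))).Finite :=
  hf.preimage (f := fun j : ℤ => j + 1) (fun a _ b _ h => by simpa using h)

/-- Flux. -/
def Fl (Δv ut Tt : ℝ) (f : ℤ → ℝ) (j : ℤ) : ℝ :=
  fhalf f j * (vhalf Δv j - ut) + (Tt / Δv) * (f (j + 1) - f j)

/-- Discrete conservation of mass, momentum and kinetic energy for the second-order
discrete Fokker–Planck operator. -/
theorem stmt0 (Δv n ut Tt : ℝ) (hΔv : 0 < Δv) (f : ℤ → ℝ)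
    (hf : (Function.support f).Finite)
    (hn : n = Δv * ∑' j : ℤ, f j)
    (hu : n * ut = Δv * ∑' j : ℤ, vhalf Δv j * fhalf f j)
    (hT : n * Tt = Δv * ∑' j : ℤ, (vhalf Δv j - ut) ^ 2 * fhalf f j) :
    Δv * ∑' j : ℤ, Qdisc Δv ut Tt f j = 0 ∧
    Δv * ∑' j : ℤ, vgrid Δv j * Qdisc Δv ut Tt f j = 0 ∧
    Δv * ∑' j : ℤ, (vgrid Δv j ^ 2 / 2) * Qdisc Δv ut Tt f j = 0 := by
  have hd : Δv ≠ 0 := hΔv.ne'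
  have hf' := fin_shift hf
  have hA : HasSum f (∑' j, f j) := by
    have := sm_mul hf (fun _ => 1)
    simp only [one_mul] at this
    exact this.hasSum
  have hfh : (Function.support (fhalf f)).Finite := by
    apply (hf.union hf').subset
    intro j hj
    by_contra hc
    simp only [Set.mem_union, Function.mem_support, not_or, not_not] at hc
    apply hj
    simp [fhalf, hc.1, hc.2]
  have hFl : (Function.support (Fl Δv ut Tt f)).Finite := by
    apply (hf.union hf').subset
    intro j hj
    by_contra hc
    simp only [Set.mem_union, Function.mem_support, not_or, not_not] at hc
    apply hj
    simp [Fl, fhalf, hc.1, hc.2]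
  have hB := (sm_mul hfh (fun j => vhalf Δv j)).hasSum
  have hC := (sm_mul hfh (fun j => (vhalf Δv j - ut) ^ 2)).hasSum
  generalize (∑' j, f j) = S at *
  generalize (∑' j, vhalf Δv j * fhalf f j) = M at *
  generalize (∑' j, (vhalf Δv j - ut) ^ 2 * fhalf f j) = E at *
  have hM : M = ut * S := by
    apply mul_left_cancel₀ hd
    rw [← hu, hn]; ring
  have hE : E = Tt * S := by
    apply mul_left_cancel₀ hd
    rw [← hT, hn]; ring
  have hH : HasSum (fhalf f) S := by
    have := (hA.add (hs_shift' hA)).div_const 2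
    rw [add_self_div_two] at this
    exact this
  have hD : HasSum (fun j => fhalf f j * (vhalf Δv j - ut)) 0 := by
    refine hs_congr (hB.sub (hH.mul_left ut)) ?_ ?_
    · intro j; ring
    · rw [hM]; ring
  have hF : HasSum (Fl Δv ut Tt f) 0 := by
    refine hs_congr (hD.add (((hs_shift' hA).sub hA).mul_left (Tt / Δv))) ?_ ?_
    · intro j; rfl
    · ring
  have hG : HasSum (fun j => vhalf Δv j * Fl Δv ut Tt f j) 0 := by
    have h1 := (sm_mul hf (fun j => vgrid Δv j)).hasSum
    have h2 := ((hs_shift' h1).sub h1).sub ((hA.add (hs_shift' hA)).mul_left (Δv / 2))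
    refine hs_congr ((hC.add (hD.mul_left ut)).add (h2.mul_left (Tt / Δv))) ?_ ?_
    · intro j
      simp only [Fl, vhalf, vgrid, fhalf]
      push_cast
      ring
    · rw [hE]; field_simp; ring
  have hQ : ∀ j, Qdisc Δv ut Tt f j = (1 / Δv) * (Fl Δv ut Tt f j - Fl Δv ut Tt f (j - 1)) := by
    intro j
    simp only [Qdisc, Fl, sub_add_cancel]
    field_simp
    ring
  refine ⟨?_, ?_, ?_⟩
  · have := (hs_tele hF.summable).mul_left (1 / Δv)
    simp only [hQ, this.tsum_eq, mul_zero]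
  · have := ((hs_tele (sm_mul hFl (fun j => vgrid Δv j))).mul_left (1 / Δv)).sub (hs_shift hF)
    have h : HasSum (fun j => vgrid Δv j * Qdisc Δv ut Tt f j) 0 := by
      refine hs_congr (this) ?_ ?_
      · intro j
        simp only [hQ, vgrid]
        push_cast
        field_simp
        ring
      · simp
    rw [h.tsum_eq, mul_zero]
  · have := ((hs_tele (sm_mul hFl (fun j => vgrid Δv j ^ 2 / 2))).mul_left (1 / Δv)).sub
      (hs_shift hG)
    have h : HasSum (fun j => (vgrid Δv j ^ 2 / 2) * Qdisc Δv ut Tt f j) 0 := by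
      refine hs_congr (this) ?_ ?_
      · intro j
        simp only [hQ, vgrid, vhalf]
        push_cast
        field_simp
        ring
      · simp
    rw [h.tsum_eq, mul_zero]

end
end

section
/- Let Δv > 0, ũ ∈ ℝ, T̃ > 0, let f : ℤ → ℝ be finitely supported, and let M : ℤ → ℝ satisfy M_j > 0 for all j. Define the flux F_{j+1/2} = f_{j+1/2}(v_{j+1/2} − ũ) + (T̃/Δv)(f_{j+1} − f_j), so that the second-order discrete Fokker–Planck operator is Q_j = (F_{j+1/2} − F_{j−1/2})/Δv. Assume there exists a sequence M̃ : ℤ → ℝ with M̃_{j+1/2} ≥ 0 for all j such that F_{j+1/2} = (T̃/Δv)·M̃_{j+1/2}·(f_{j+1}/M_{j+1} − f_j/M_j) for every j ∈ ℤ. Then Δv·∑_{j∈ℤ} Q_j · (f_j/M_j) ≤ 0. -/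
noncomputable section

/-- The flux `F_{j+1/2} = f_{j+1/2}(v_{j+1/2} − ũ) + (T̃/Δv)(f_{j+1} − f_j)`. -/
def flux2 (Δv ut Tt : ℝ) (f : ℤ → ℝ) (j : ℤ) : ℝ :=
  fhalf f j * (vhalf Δv j - ut) + (Tt / Δv) * (f (j + 1) - f j)

/-- Discrete entropy inequality: if the standard-form flux admits an `L²`-form
representation with nonnegative weights `M̃_{j+1/2}`, then
`Δv·∑_j Q_j (f_j/M_j) ≤ 0`, where `Q_j = (F_{j+1/2} − F_{j−1/2})/Δv`. -/
theorem stmt1 (Δv ut Tt : ℝ) (hΔv : 0 < Δv) (hTt : 0 < Tt)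
    (f M Mt : ℤ → ℝ) (hf : (Function.support f).Finite)
    (hM : ∀ j : ℤ, 0 < M j) (hMt : ∀ j : ℤ, 0 ≤ Mt j)
    (hflux : ∀ j : ℤ, flux2 Δv ut Tt f j
      = (Tt / Δv) * Mt j * (f (j + 1) / M (j + 1) - f j / M j)) :
    Δv * ∑' j : ℤ,
      ((flux2 Δv ut Tt f j - flux2 Δv ut Tt f (j - 1)) / Δv) * (f j / M j) ≤ 0 := by
  set g : ℤ → ℝ := fun j => f j / M j with hg
  set F : ℤ → ℝ := flux2 Δv ut Tt f with hF
  have hgs : (Function.support g).Finite := by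
    refine hf.subset ?_
    intro j hj hfj
    exact hj (by simp [hg, hfj])
  have s1 : Summable (fun j => F j * g j) :=
    summable_of_hasFiniteSupport (hgs.subset (Function.support_mul_subset_right F g))
  have s2 : Summable (fun j => F (j - 1) * g j) :=
    summable_of_hasFiniteSupport
      (hgs.subset (Function.support_mul_subset_right (fun j => F (j - 1)) g))
  have e1 : ∑' j, F (j - 1) * g j = ∑' j, F j * g (j + 1) := by
    rw [← (Equiv.addRight (1 : ℤ)).tsum_eq (fun j => F (j - 1) * g j)]
    simp
  have s3 : Summable (fun j => F j * g (j + 1)) := by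
    have := (Equiv.addRight (1 : ℤ)).summable_iff.mpr s2
    simpa [Function.comp_def] using this
  have e2 : ∑' j : ℤ, ((F j - F (j - 1)) / Δv) * (f j / M j)
      = (∑' j, (F j * g j - F j * g (j + 1))) / Δv := by
    rw [s1.tsum_sub s3, ← e1, ← s1.tsum_sub s2, ← tsum_div_const]
    refine tsum_congr fun j => ?_
    simp only [hg]
    ring
  rw [e2, mul_div_cancel₀ _ hΔv.ne']
  refine tsum_nonpos fun j => ?_
  have h := hflux j
  have hc : 0 ≤ Tt / Δv * Mt j * (g (j + 1) - g j) ^ 2 :=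
    mul_nonneg (mul_nonneg (div_pos hTt hΔv).le (hMt j)) (sq_nonneg _)
  have h' : F j = Tt / Δv * Mt j * (g (j + 1) - g j) := h
  rw [h']
  linarith

end
end

section
/- Let u ∈ ℝ, T > 0, n > 0, and let M(w) = (n/√(2πT))·exp(−(w − u)²/(2T)) be the Maxwellian. Let f : ℝ → ℝ be twice continuously differentiable and fix v ∈ ℝ such that f'(v)·M(v) − f(v)·M'(v) ≠ 0. For h > 0 define M̃(h) = (h/T)·[M(v)M(v+h)·((f(v)+f(v+h))/2)·(v + h/2 − u)] / (f(v+h)M(v) − f(v)M(v+h)) + [M(v)M(v+h)·(f(v+h) − f(v))] / (f(v+h)M(v) − f(v)M(v+h)). Then there exist constants C > 0 and δ > 0 such that for all 0 < h < δ, the denominator f(v+h)M(v) − f(v)M(v+h) is nonzero and |M̃(h) − M(v + h/2)| ≤ C·h². In particular M̃(h) > 0 for all sufficiently small h > 0. -/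
noncomputable section

/-- The Maxwellian `M(w) = (n/√(2πT))·exp(−(w−u)²/(2T))`. -/
def Maxw (n u T : ℝ) (w : ℝ) : ℝ :=
  n / Real.sqrt (2 * Real.pi * T) * Real.exp (-(w - u) ^ 2 / (2 * T))

/-- The reconstructed half-grid Maxwellian weight `M̃(h)`. -/
def Mtilde (n u T : ℝ) (f : ℝ → ℝ) (v h : ℝ) : ℝ :=
  (h / T) * (Maxw n u T v * Maxw n u T (v + h) * ((f v + f (v + h)) / 2) * (v + h / 2 - u))
      / (f (v + h) * Maxw n u T v - f v * Maxw n u T (v + h))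
    + (Maxw n u T v * Maxw n u T (v + h) * (f (v + h) - f v))
      / (f (v + h) * Maxw n u T v - f v * Maxw n u T (v + h))

open Asymptotics Filter Topology

lemma aux_bracket (u T v : ℝ) (f : ℝ → ℝ) (hf : DifferentiableAt ℝ f v) :
    (fun h : ℝ => f (v + h) - f v + 2 * ((v + h / 2 - u) * h / (2 * T)) * ((f v + f (v + h)) / 2)
      - (f (v + h) * (Real.exp (h ^ 2 / (8 * T)) * Real.exp ((v + h / 2 - u) * h / (2 * T)))
        - f v * (Real.exp (h ^ 2 / (8 * T)) * Real.exp (-((v + h / 2 - u) * h / (2 * T))))))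
      =O[𝓝 0] (fun h : ℝ => h ^ 3) := by
  set s : ℝ → ℝ := fun h => (v + h / 2 - u) * h / (2 * T) with hs
  set k : ℝ → ℝ := fun h => Real.exp (h ^ 2 / (8 * T)) with hk
  have sc : Continuous s := by fun_prop
  have s0 : Tendsto s (𝓝 0) (𝓝 0) := by
    have := sc.tendsto 0
    simpa [hs] using this
  have sO : s =O[𝓝 0] (fun h : ℝ => h) := by
    have h1 : (fun h : ℝ => (v + h / 2 - u) / (2 * T)) =O[𝓝 0] (fun _ : ℝ => (1:ℝ)) :=
      Tendsto.isBigO_one ℝ (Continuous.tendsto (by fun_prop) 0)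
    have := h1.mul (isBigO_refl (fun h : ℝ => h) (𝓝 0))
    refine (this.congr (fun h => ?_) (fun h => ?_))
    · simp only [hs]; ring
    · ring
  have qO : (fun h : ℝ => h ^ 2 / (8 * T)) =O[𝓝 0] (fun h : ℝ => h ^ 2) := by
    have := (isBigO_refl (fun h : ℝ => h ^ 2) (𝓝 0)).const_mul_left (8 * T)⁻¹
    refine this.congr_left (fun h => ?_)
    ring
  have q0 : Tendsto (fun h : ℝ => h ^ 2 / (8 * T)) (𝓝 0) (𝓝 0) := by
    have : Continuous (fun h : ℝ => h ^ 2 / (8 * T)) := by fun_prop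
    simpa using this.tendsto 0
  have E1 := Real.exp_sub_sum_range_isBigO_pow 1
  have E2 := Real.exp_sub_sum_range_isBigO_pow 2
  have E3 := Real.exp_sub_sum_range_isBigO_pow 3
  simp only [Finset.sum_range_succ, Finset.sum_range_zero, Nat.factorial] at E1 E2 E3
  norm_num at E1 E2 E3
  have kO : (fun h => k h - 1) =O[𝓝 0] (fun h : ℝ => h ^ 2) :=
    (E1.comp_tendsto q0).trans qO
  have sn0 : Tendsto (fun h => - s h) (𝓝 0) (𝓝 0) := by simpa using s0.neg
  have p1 : (fun h => Real.exp (s h) - (1 + s h)) =O[𝓝 0] (fun h : ℝ => h ^ 2) :=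
    (E2.comp_tendsto s0).trans (sO.pow 2)
  have r1 : (fun h => Real.exp (s h) - (1 + s h + s h ^ 2 / 2)) =O[𝓝 0] (fun h : ℝ => h ^ 3) :=
    (E3.comp_tendsto s0).trans (sO.pow 3)
  have r2 : (fun h => Real.exp (- s h) - (1 + - s h + (- s h) ^ 2 / 2)) =O[𝓝 0]
      (fun h : ℝ => h ^ 3) :=
    (E3.comp_tendsto sn0).trans (sO.neg_left.pow 3)
  have e1 : (fun h => Real.exp (s h) - 1) =O[𝓝 0] (fun h : ℝ => h) :=
    (E1.comp_tendsto s0).trans sO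
  have e2 : (fun h => Real.exp (- s h) - 1) =O[𝓝 0] (fun h : ℝ => h) :=
    (E1.comp_tendsto sn0).trans sO.neg_left
  have eb : (fun h => Real.exp (s h)) =O[𝓝 0] (fun _ : ℝ => (1:ℝ)) :=
    Tendsto.isBigO_one ℝ (Continuous.tendsto (by fun_prop) 0)
  have fO : (fun h => f (v + h) - f v) =O[𝓝 0] (fun h : ℝ => h) := by
    have h1 := hf.hasDerivAt.isBigO_sub
    have t : Tendsto (fun h : ℝ => v + h) (𝓝 0) (𝓝 v) := by
      have : Continuous (fun h : ℝ => v + h) := by fun_prop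
      simpa using this.tendsto 0
    have := h1.comp_tendsto t
    refine this.congr (fun h => rfl) (fun h => ?_)
    simp
  have phi : (fun h => (Real.exp (s h) - (1 + s h)) + Real.exp (s h) * (k h - 1)) =O[𝓝 0]
      (fun h : ℝ => h ^ 2) :=
    p1.add ((eb.mul kO).congr_right (fun h => by ring))
  have A := fO.mul phi
  have B := (e2.sub e1).mul kO
  have C := r2.sub r1
  have A' := A.congr_right (g₂ := fun h : ℝ => h ^ 3) (fun h => by ring)
  have B' := B.congr_right (g₂ := fun h : ℝ => h ^ 3) (fun h => by ring)
  have := ((C.add B').const_mul_left (f v)).sub A'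
  refine this.congr_left (fun h => ?_)
  simp only [hs, hk]
  ring

lemma Maxw_pos {n u T : ℝ} (hn : 0 < n) (hT : 0 < T) (w : ℝ) : 0 < Maxw n u T w := by
  unfold Maxw; positivity

lemma Maxw_diff (n u T : ℝ) : Differentiable ℝ (Maxw n u T) := by
  unfold Maxw; fun_prop

lemma aux_num (n u T : ℝ) (hT : 0 < T) (f : ℝ → ℝ) (v : ℝ) (hf : DifferentiableAt ℝ f v) :
    (fun h : ℝ => (h / T) * (Maxw n u T v * Maxw n u T (v + h) * ((f v + f (v + h)) / 2)
        * (v + h / 2 - u)) + (Maxw n u T v * Maxw n u T (v + h) * (f (v + h) - f v))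
      - (f (v + h) * Maxw n u T v - f v * Maxw n u T (v + h)) * Maxw n u T (v + h / 2))
      =O[𝓝 0] (fun h : ℝ => h ^ 3) := by
  have mb : (fun h => Maxw n u T v * Maxw n u T (v + h)) =O[𝓝 0] (fun _ : ℝ => (1:ℝ)) := by
    have := (Maxw_diff n u T).continuous
    exact Tendsto.isBigO_one ℝ (Continuous.tendsto (by fun_prop) 0)
  have := mb.mul (aux_bracket u T v f hf)
  refine this.congr (fun h => ?_) (fun h => by ring)
  have h1 : Maxw n u T (v + h / 2) = Maxw n u T (v + h) *
      (Real.exp (h ^ 2 / (8 * T)) * Real.exp ((v + h / 2 - u) * h / (2 * T))) := by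
    unfold Maxw
    rw [mul_assoc (n / _), ← Real.exp_add, ← Real.exp_add]
    congr 2
    field_simp
    ring
  have h0 : Maxw n u T (v + h / 2) = Maxw n u T v *
      (Real.exp (h ^ 2 / (8 * T)) * Real.exp (-((v + h / 2 - u) * h / (2 * T)))) := by
    unfold Maxw
    rw [mul_assoc (n / _), ← Real.exp_add, ← Real.exp_add]
    congr 2
    field_simp
    ring
  linear_combination f (v + h) * Maxw n u T v * h1 - f v * Maxw n u T (v + h) * h0

/-- Second-order consistency of the reconstructed half-grid Maxwellian weight:
`M̃(h) = M(v + h/2) + O(h²)`, and in particular `M̃(h) > 0` for small `h > 0`. -/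
theorem stmt3 (n u T : ℝ) (hn : 0 < n) (hT : 0 < T) (f : ℝ → ℝ)
    (hf : ContDiff ℝ 2 f) (v : ℝ)
    (hne : deriv f v * Maxw n u T v - f v * deriv (Maxw n u T) v ≠ 0) :
    (∃ C > (0:ℝ), ∃ δ > (0:ℝ), ∀ h : ℝ, 0 < h → h < δ →
        f (v + h) * Maxw n u T v - f v * Maxw n u T (v + h) ≠ 0 ∧
        |Mtilde n u T f v h - Maxw n u T (v + h / 2)| ≤ C * h ^ 2) ∧
    (∃ δ' > (0:ℝ), ∀ h : ℝ, 0 < h → h < δ' → 0 < Mtilde n u T f v h) := by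
  have hfd : DifferentiableAt ℝ f v := (hf.differentiable (by norm_num)) v
  have hMd := Maxw_diff n u T
  set W := deriv f v * Maxw n u T v - f v * deriv (Maxw n u T) v with hW
  have hD : HasDerivAt (fun h : ℝ => f (v + h) * Maxw n u T v - f v * Maxw n u T (v + h)) W 0 := by
    have a : HasDerivAt (fun h : ℝ => f (v + h)) (deriv f v) 0 := by
      have : HasDerivAt f (deriv f v) (v + 0) := by simpa using hfd.hasDerivAt
      exact this.comp_const_add v 0
    have b : HasDerivAt (fun h : ℝ => Maxw n u T (v + h)) (deriv (Maxw n u T) v) 0 := by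
      have : HasDerivAt (Maxw n u T) (deriv (Maxw n u T) v) (v + 0) := by
        simpa using (hMd v).hasDerivAt
      exact this.comp_const_add v 0
    exact (a.mul_const _).sub (b.const_mul _)
  have hlow : ∀ᶠ h in 𝓝 (0:ℝ),
      |W| / 2 * |h| ≤ |f (v + h) * Maxw n u T v - f v * Maxw n u T (v + h)| := by
    have := hD.isLittleO.def (c := |W| / 2) (by positivity)
    filter_upwards [this] with h hh
    simp only [add_zero, sub_zero, smul_eq_mul, Real.norm_eq_abs] at hh
    rw [show f v * Maxw n u T v - f v * Maxw n u T v = 0 by ring, sub_zero] at hh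
    have h3 := abs_sub_abs_le_abs_sub (h * W)
      (f (v + h) * Maxw n u T v - f v * Maxw n u T (v + h))
    rw [abs_sub_comm (h * W), abs_mul] at h3
    linarith
  obtain ⟨K, hK, hnum⟩ := (aux_num n u T hT f v hfd).exists_pos
  have hWp : 0 < |W| := abs_pos.mpr hne
  have main : ∀ᶠ h in 𝓝 (0:ℝ), 0 < h →
        f (v + h) * Maxw n u T v - f v * Maxw n u T (v + h) ≠ 0 ∧
        |Mtilde n u T f v h - Maxw n u T (v + h / 2)| ≤ (2 * K / |W|) * h ^ 2 := by
    filter_upwards [hlow, hnum.bound] with h h1 h2 hp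
    rw [abs_of_pos hp] at h1
    have hDp : 0 < |f (v + h) * Maxw n u T v - f v * Maxw n u T (v + h)| :=
      lt_of_lt_of_le (by positivity) h1
    have hD0 := abs_pos.mp hDp
    refine ⟨hD0, ?_⟩
    unfold Mtilde
    rw [← add_div, div_sub' hD0, abs_div, div_le_iff₀ hDp]
    rw [Real.norm_eq_abs, Real.norm_eq_abs, abs_of_pos (by positivity : 0 < h ^ 3)] at h2
    refine h2.trans ?_
    calc K * h ^ 3 = 2 * K / |W| * h ^ 2 * (|W| / 2 * h) := by field_simp
      _ ≤ _ := by gcongr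
  have pos : ∀ᶠ h in 𝓝 (0:ℝ), 0 < Maxw n u T (v + h / 2) - (2 * K / |W|) * h ^ 2 := by
    have hc : Continuous (fun h : ℝ => Maxw n u T (v + h / 2) - (2 * K / |W|) * h ^ 2) := by
      have := hMd.continuous
      fun_prop
    refine hc.continuousAt.eventually_const_lt ?_
    simpa using Maxw_pos hn hT v
  constructor
  · obtain ⟨δ, hδ, H⟩ := Metric.eventually_nhds_iff.mp main
    refine ⟨2 * K / |W|, by positivity, δ, hδ, fun h hp hl => H ?_ hp⟩
    simpa [abs_of_pos hp] using hl
  · obtain ⟨δ, hδ, H⟩ := Metric.eventually_nhds_iff.mp (main.and pos)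
    refine ⟨δ, hδ, fun h hp hl => ?_⟩
    obtain ⟨a, b⟩ := H (y := h) (by simpa [abs_of_pos hp] using hl)
    have := (abs_le.mp (a hp).2).1
    linarith

end
end

section
/- Let u, T ∈ ℝ, let f : ℝ → ℝ be six times continuously differentiable, let C₀ > 0, and fix v ∈ ℝ. Define the continuous Fokker–Planck operator Q(f)(w) = d/dw[(w − u)f(w) + T·f'(w)]. For h > 0 let ũ(h), T̃(h), ŭ(h), T̆(h) be real numbers with |ũ(h) − u| ≤ C₀h², |T̃(h) − T| ≤ C₀h², |ŭ(h) − u| ≤ C₀h⁴, |T̆(h) − T| ≤ C₀h⁴. Define f̆₊(h) = (−f(v−h) + 9f(v) + 9f(v+h) − f(v+2h))/16, f̆₋(h) = (−f(v−2h) + 9f(v−h) + 9f(v) − f(v+h))/16, Q̄⁽⁴⁾(h) = [(v + h/2 − ŭ(h))·f̆₊(h) − (v − h/2 − ŭ(h))·f̆₋(h)]/h + T̆(h)·(−f(v−2h) + 28f(v−h) − 54f(v) + 28f(v+h) − f(v+2h))/(24h²), and for w ∈ ℝ let Q₂(w; h) = [((f(w)+f(w+h))/2)(w + h/2 − ũ(h))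 − ((f(w−h)+f(w))/2)(w − h/2 − ũ(h))]/h + T̃(h)·(f(w+h) − 2f(w) + f(w−h))/h². Set Q⁽⁴⁾(h) = Q̄⁽⁴⁾(h) − (1/24)·(Q₂(v+h; h) − 2Q₂(v; h) + Q₂(v−h; h)). Then there exist C > 0 and δ > 0 such that |Q⁽⁴⁾(h) − Q(f)(v)| ≤ C·h⁴ for all 0 < h < δ. -/
noncomputable section

/-- The continuous Fokker–Planck operator `Q(f)(w) = d/dw[(w−u)f(w) + T f'(w)]`. -/
def Qcont (u T : ℝ) (f : ℝ → ℝ) (w : ℝ) : ℝ :=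
  deriv (fun z => (z - u) * f z + T * deriv f z) w

/-- `f̆₊(h) = (−f(v−h) + 9f(v) + 9f(v+h) − f(v+2h))/16`. -/
def fbrevePlus (f : ℝ → ℝ) (v h : ℝ) : ℝ :=
  (-f (v - h) + 9 * f v + 9 * f (v + h) - f (v + 2 * h)) / 16

/-- `f̆₋(h) = (−f(v−2h) + 9f(v−h) + 9f(v) − f(v+h))/16`. -/
def fbreveMinus (f : ℝ → ℝ) (v h : ℝ) : ℝ :=
  (-f (v - 2 * h) + 9 * f (v - h) + 9 * f v - f (v + h)) / 16

/-- The second-order discretization `Q₂(w; h)` with parameters `ũ, T̃`. -/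
def Q2pt (ut Tt : ℝ) (f : ℝ → ℝ) (w h : ℝ) : ℝ :=
  (((f w + f (w + h)) / 2) * (w + h / 2 - ut)
      - ((f (w - h) + f w) / 2) * (w - h / 2 - ut)) / h
    + Tt * (f (w + h) - 2 * f w + f (w - h)) / h ^ 2

/-- The fourth-order finite-volume approximation `Q̄⁽⁴⁾(h)` with parameters `ŭ, T̆`. -/
def Qbar4 (ub Tb : ℝ) (f : ℝ → ℝ) (v h : ℝ) : ℝ :=
  ((v + h / 2 - ub) * fbrevePlus f v h - (v - h / 2 - ub) * fbreveMinus f v h) / h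
    + Tb * (-f (v - 2 * h) + 28 * f (v - h) - 54 * f v + 28 * f (v + h) - f (v + 2 * h))
        / (24 * h ^ 2)

/-- The fourth-order pointwise approximation `Q⁽⁴⁾(h)`. -/
def Q4 (ut Tt ub Tb : ℝ) (f : ℝ → ℝ) (v h : ℝ) : ℝ :=
  Qbar4 ub Tb f v h
    - (1 / 24) * (Q2pt ut Tt f (v + h) h - 2 * Q2pt ut Tt f v h + Q2pt ut Tt f (v - h) h)

/-- Taylor expansion with uniformly controlled sixth-order remainder. -/
lemma stmt5_taylor (f : ℝ → ℝ) (hf : ContDiff ℝ 6 f) (v : ℝ) :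
    ∃ a3 a4 a5 M δ : ℝ, 0 < M ∧ 0 < δ ∧ ∀ s : ℝ, |s| < δ →
      |f (v + s) - (f v + deriv f v * s + deriv (deriv f) v / 2 * s ^ 2 + a3 * s ^ 3
        + a4 * s ^ 4 + a5 * s ^ 5)| ≤ M * |s| ^ 6 := by
  have h := (taylor_isLittleO_univ (x₀ := v) (n := 6) (by exact_mod_cast hf)).bound
    (show (0:ℝ) < 1 by norm_num)
  rw [Metric.eventually_nhds_iff] at h
  obtain ⟨δ, hδ, h⟩ := h
  refine ⟨iteratedDeriv 3 f v / 6, iteratedDeriv 4 f v / 24, iteratedDeriv 5 f v / 120,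
    1 + |iteratedDeriv 6 f v / 720|, δ, by positivity, hδ, fun s hs => ?_⟩
  have h1 := h (y := v + s) (by simpa [Real.dist_eq] using hs)
  simp only [taylor_within_apply, Finset.sum_range_succ, Finset.sum_range_zero,
    iteratedDerivWithin_univ, Nat.factorial, add_sub_cancel_left, smul_eq_mul,
    Real.norm_eq_abs, abs_pow, iteratedDeriv_zero, iteratedDeriv_one] at h1
  have e2 : iteratedDeriv 2 f v = deriv (deriv f) v := by
    rw [iteratedDeriv_succ, iteratedDeriv_one]
  rw [e2] at h1
  have h2 : |iteratedDeriv 6 f v / 720 * s ^ 6| = |iteratedDeriv 6 f v / 720| * |s| ^ 6 := by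
    rw [abs_mul, abs_pow]
  norm_num at h1
  have h3 := le_abs_self (iteratedDeriv 6 f v / 720 * s ^ 6)
  have h4 := neg_abs_le (iteratedDeriv 6 f v / 720 * s ^ 6)
  rw [abs_le] at h1 ⊢
  constructor <;> linarith [h1.1, h1.2]

/-- The scaled consistency error. -/
def stmt5Err (u T v a0 a1 a2 a3 a4 a5 : ℝ) (x : Fin 9 → ℝ) : ℝ :=
     0 - 1 / 12 *T*x 5 + 4 / 3 *T*x 6 + 4 / 3 *T*x 7 - 1 / 12 *T*x 8 - 1 / 1 *a1*x 3
     + 2 / 1 *a2*x 4 - 1 / 4 *a3*x 0^2*x 3 + 1 / 4 *a3*x 1 - 3 / 2 *a4 + 1 / 1 *a4*x 0^2*x 4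
     - 1 / 1 *a4*x 2 + 5 / 4 *a5*x 0^2*x 1 + 11 / 4 *a5*x 0^4*x 3 + 4 / 1 *a5*u - 4 / 1 *a5*v
     - 1 / 12 *x 0*x 5*u + 1 / 12 *x 0*x 5*v + 2 / 3 *x 0*x 6*u - 2 / 3 *x 0*x 6*v
     - 2 / 3 *x 0*x 7*u + 2 / 3 *x 0*x 7*v + 1 / 12 *x 0*x 8*u - 1 / 12 *x 0*x 8*v
     - 1 / 24 *x 0^2*x 2*x 5 + 1 / 6 *x 0^2*x 2*x 6 + 1 / 6 *x 0^2*x 2*x 7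
     - 1 / 24 *x 0^2*x 2*x 8 - 1 / 16 *x 0^2*x 5 + 1 / 4 *x 0^2*x 6 + 1 / 4 *x 0^2*x 7
     - 1 / 16 *x 0^2*x 8 - 1 / 48 *x 0^3*x 1*x 5 + 1 / 24 *x 0^3*x 1*x 6
     - 1 / 24 *x 0^3*x 1*x 7 + 1 / 48 *x 0^3*x 1*x 8 - 1 / 24 *x 0^4*x 5*x 4
     + 7 / 6 *x 0^4*x 6*x 4 + 7 / 6 *x 0^4*x 7*x 4 - 1 / 24 *x 0^4*x 8*x 4
     - 1 / 16 *x 0^5*x 3*x 5 + 5 / 8 *x 0^5*x 3*x 6 - 5 / 8 *x 0^5*x 3*x 7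
     + 1 / 16 *x 0^5*x 3*x 8

lemma stmt5_identity (u T v h a0 a1 a2 a3 a4 a5 p q r s r1 r2 r3 r4 : ℝ) (hh : h ≠ 0)
    (f : ℝ → ℝ) (h0 : f v = a0)
    (h1 : f (v - 2 * h) = a0 + a1 * (-2 * h) + a2 * (-2 * h) ^ 2 + a3 * (-2 * h) ^ 3
      + a4 * (-2 * h) ^ 4 + a5 * (-2 * h) ^ 5 + r1 * h ^ 6)
    (h2 : f (v - h) = a0 + a1 * (-h) + a2 * (-h) ^ 2 + a3 * (-h) ^ 3
      + a4 * (-h) ^ 4 + a5 * (-h) ^ 5 + r2 * h ^ 6)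
    (h3 : f (v + h) = a0 + a1 * h + a2 * h ^ 2 + a3 * h ^ 3
      + a4 * h ^ 4 + a5 * h ^ 5 + r3 * h ^ 6)
    (h4 : f (v + 2 * h) = a0 + a1 * (2 * h) + a2 * (2 * h) ^ 2 + a3 * (2 * h) ^ 3
      + a4 * (2 * h) ^ 4 + a5 * (2 * h) ^ 5 + r4 * h ^ 6) :
    Q4 (u + p * h ^ 2) (T + q * h ^ 2) (u + r * h ^ 4) (T + s * h ^ 4) f v h
      - (a0 + (v - u) * a1 + T * (2 * a2))
      = stmt5Err u T v a0 a1 a2 a3 a4 a5 ![h, p, q, r, s, r1, r2, r3, r4] * h ^ 4 := by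
  have e1 : v + h + h = v + 2 * h := by ring
  have e2 : v - h - h = v - 2 * h := by ring
  have x0 : (![h, p, q, r, s, r1, r2, r3, r4] : Fin 9 → ℝ) 0 = h := rfl
  have x1 : (![h, p, q, r, s, r1, r2, r3, r4] : Fin 9 → ℝ) 1 = p := rfl
  have x2 : (![h, p, q, r, s, r1, r2, r3, r4] : Fin 9 → ℝ) 2 = q := rfl
  have x3 : (![h, p, q, r, s, r1, r2, r3, r4] : Fin 9 → ℝ) 3 = r := rfl
  have x4 : (![h, p, q, r, s, r1, r2, r3, r4] : Fin 9 → ℝ) 4 = s := rfl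
  have x5 : (![h, p, q, r, s, r1, r2, r3, r4] : Fin 9 → ℝ) 5 = r1 := rfl
  have x6 : (![h, p, q, r, s, r1, r2, r3, r4] : Fin 9 → ℝ) 6 = r2 := rfl
  have x7 : (![h, p, q, r, s, r1, r2, r3, r4] : Fin 9 → ℝ) 7 = r3 := rfl
  have x8 : (![h, p, q, r, s, r1, r2, r3, r4] : Fin 9 → ℝ) 8 = r4 := rfl
  unfold Q4 Qbar4 Q2pt fbrevePlus fbreveMinus stmt5Err
  rw [x0, x1, x2, x3, x4, x5, x6, x7, x8]
  simp only [e1, e2, add_sub_cancel_right, sub_add_cancel]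
  rw [h0, h1, h2, h3, h4]
  field_simp
  ring

lemma stmt5_quot (x C t : ℝ) (n : ℕ) (ht : 0 < t) (hx : |x| ≤ C * t ^ n) :
    ∃ r, |r| ≤ C ∧ x = r * t ^ n := by
  have hp : 0 < t ^ n := by positivity
  refine ⟨x / t ^ n, ?_, by field_simp⟩
  rw [abs_div, abs_of_pos hp, div_le_iff₀ hp]
  exact hx

lemma stmt5_Qcont (u T v : ℝ) (f : ℝ → ℝ) (hf : ContDiff ℝ 6 f) :
    Qcont u T f v = f v + (v - u) * deriv f v + T * (2 * (deriv (deriv f) v / 2)) := by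
  have d1 : DifferentiableAt ℝ f v := (hf.differentiable (by norm_num)) v
  have d2 : DifferentiableAt ℝ (deriv f) v := by
    have hc : ContDiff ℝ 1 (deriv f) := by
      have h2 : ContDiff ℝ (1 + 1) f := hf.of_le (by norm_num)
      exact (contDiff_succ_iff_deriv.1 h2).2.2
    exact (hc.differentiable (by norm_num)) v
  have hd : HasDerivAt (fun z => (z - u) * f z + T * deriv f z)
      (1 * f v + (v - u) * deriv f v + T * deriv (deriv f) v) v :=
    (((hasDerivAt_id v).sub_const u).mul d1.hasDerivAt).add (d2.hasDerivAt.const_mul T)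
  unfold Qcont
  rw [hd.deriv]
  ring

/-- Fourth-order consistency of the fourth-order discretization of the
Fokker–Planck operator. -/
theorem stmt5 (u T C₀ v : ℝ) (hC₀ : 0 < C₀) (f : ℝ → ℝ) (hf : ContDiff ℝ 6 f)
    (ut Tt ub Tb : ℝ → ℝ)
    (hut : ∀ h : ℝ, 0 < h → |ut h - u| ≤ C₀ * h ^ 2)
    (hTt : ∀ h : ℝ, 0 < h → |Tt h - T| ≤ C₀ * h ^ 2)
    (hub : ∀ h : ℝ, 0 < h → |ub h - u| ≤ C₀ * h ^ 4)
    (hTb : ∀ h : ℝ, 0 < h → |Tb h - T| ≤ C₀ * h ^ 4) :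
    ∃ C > (0:ℝ), ∃ δ > (0:ℝ), ∀ h : ℝ, 0 < h → h < δ →
      |Q4 (ut h) (Tt h) (ub h) (Tb h) f v h - Qcont u T f v| ≤ C * h ^ 4 := by
  obtain ⟨a3, a4, a5, M, δ, hM, hδ, ht⟩ := stmt5_taylor f hf v
  have hcont : Continuous (stmt5Err u T v (f v) (deriv f v) (deriv (deriv f) v / 2) a3 a4 a5) := by
    unfold stmt5Err
    fun_prop
  obtain ⟨C, hC⟩ := (isCompact_closedBall (0 : Fin 9 → ℝ)
    (1 + C₀ + 64 * M)).exists_bound_of_continuousOn hcont.continuousOn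
  refine ⟨|C| + 1, by positivity, min 1 (δ / 2), by positivity, fun h hh hlt => ?_⟩
  have hl1 : h < 1 := lt_of_lt_of_le hlt (min_le_left _ _)
  have hl2 : h < δ / 2 := lt_of_lt_of_le hlt (min_le_right _ _)
  obtain ⟨p, hp, ep⟩ := stmt5_quot _ _ _ _ hh (hut h hh)
  obtain ⟨q, hq, eq⟩ := stmt5_quot _ _ _ _ hh (hTt h hh)
  obtain ⟨r, hr, er⟩ := stmt5_quot _ _ _ _ hh (hub h hh)
  obtain ⟨s, hs, es⟩ := stmt5_quot _ _ _ _ hh (hTb h hh)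
  have key : ∀ c : ℝ, |c| ≤ 2 → ∃ R, |R| ≤ 64 * M ∧ f (v + c * h) - (f v + deriv f v * (c * h)
      + deriv (deriv f) v / 2 * (c * h) ^ 2 + a3 * (c * h) ^ 3
        + a4 * (c * h) ^ 4 + a5 * (c * h) ^ 5) = R * h ^ 6 := by
    intro c hc
    have hch : |c * h| ≤ 2 * h := by
      rw [abs_mul, abs_of_pos hh]
      gcongr
    apply stmt5_quot _ _ _ _ hh
    refine (ht (c * h) (by linarith)).trans ?_
    calc M * |c * h| ^ 6 ≤ M * (2 * h) ^ 6 := by gcongr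
      _ = 64 * M * h ^ 6 := by ring
  obtain ⟨r1, hr1, e1⟩ := key (-2) (by norm_num)
  obtain ⟨r2, hr2, e2⟩ := key (-1) (by norm_num)
  obtain ⟨r3, hr3, e3⟩ := key 1 (by norm_num)
  obtain ⟨r4, hr4, e4⟩ := key 2 (by norm_num)
  rw [show v + (-2) * h = v - 2 * h by ring] at e1
  rw [show v + (-1) * h = v - h by ring] at e2
  rw [show v + 1 * h = v + h by ring] at e3
  have hid := stmt5_identity u T v h (f v) (deriv f v) (deriv (deriv f) v / 2) a3 a4 a5
    p q r s r1 r2 r3 r4 hh.ne' f rfl (by linear_combination e1) (by linear_combination e2)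
    (by linear_combination e3) (by linear_combination e4)
  rw [stmt5_Qcont u T v f hf, show ut h = u + p * h ^ 2 by linear_combination ep,
    show Tt h = T + q * h ^ 2 by linear_combination eq,
    show ub h = u + r * h ^ 4 by linear_combination er,
    show Tb h = T + s * h ^ 4 by linear_combination es, hid, abs_mul,
    abs_of_pos (show (0:ℝ) < h ^ 4 by positivity)]
  have hb := hC ![h, p, q, r, s, r1, r2, r3, r4] (by
    rw [mem_closedBall_zero_iff, pi_norm_le_iff_of_nonneg (by positivity)]
    intro i
    have hh' : |h| ≤ 1 := by rw [abs_of_pos hh]; exact hl1.le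
    fin_cases i <;> simp [Real.norm_eq_abs] <;> linarith)
  rw [Real.norm_eq_abs] at hb
  have := le_abs_self C
  gcongr
  linarith

end
end

section
/- Let Δv > 0 and let f : ℤ → ℝ be finitely supported. Define f̆_{j+1/2} = (−f_{j−1} + 9f_j + 9f_{j+1} − f_{j+2})/16, and let n, ũ, T̃, ŭ, T̆ ∈ ℝ satisfy n = Δv·∑_j f_j, n·ũ = Δv·∑_j v_{j+1/2} f_{j+1/2}, n·T̃ = Δv·∑_j (v_{j+1/2} − ũ)² f_{j+1/2}, n·ŭ = Δv·∑_j v_{j+1/2} f̆_{j+1/2}, and n·T̆ = Δv·∑_j (v_{j+1/2} − ŭ)² f̆_{j+1/2}. Define Q̄⁽⁴⁾_j = [(v_{j+1/2} − ŭ)f̆_{j+1/2} − (v_{j−1/2} − ŭ)f̆_{j−1/2}]/Δv + T̆·(−f_{j−2} + 28f_{j−1} − 54f_j + 28f_{j+1} − f_{j+2})/(24Δv²), and Q⁽⁴⁾_j = Q̄⁽⁴⁾_j − (1/24)(Q_{j+1} − 2Q_j + Q_{j−1}), where Q is the second-order discrete Fokker–Planck operator with parameters ũ, T̃. Then Δv·∑_{j∈ℤ}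 Q⁽⁴⁾_j = 0, Δv·∑_{j∈ℤ} v_j Q⁽⁴⁾_j = 0, and Δv·∑_{j∈ℤ} (v_j²/2) Q⁽⁴⁾_j = 0. -/
noncomputable section

/-- Fourth-order half-grid reconstruction
`f̆_{j+1/2} = (−f_{j−1} + 9f_j + 9f_{j+1} − f_{j+2})/16`. -/
def fbreveHalf (f : ℤ → ℝ) (j : ℤ) : ℝ :=
  (-f (j - 1) + 9 * f j + 9 * f (j + 1) - f (j + 2)) / 16

/-- Fourth-order finite-volume approximation `Q̄⁽⁴⁾_j`. -/
def Qbar4d (Δv ub Tb : ℝ) (f : ℤ → ℝ) (j : ℤ) : ℝ :=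
  ((vhalf Δv j - ub) * fbreveHalf f j - (vhalf Δv (j - 1) - ub) * fbreveHalf f (j - 1)) / Δv
    + Tb * (-f (j - 2) + 28 * f (j - 1) - 54 * f j + 28 * f (j + 1) - f (j + 2))
        / (24 * Δv ^ 2)

/-- Fourth-order pointwise approximation
`Q⁽⁴⁾_j = Q̄⁽⁴⁾_j − (1/24)(Q_{j+1} − 2Q_j + Q_{j−1})`. -/
def Q4d (Δv ut Tt ub Tb : ℝ) (f : ℤ → ℝ) (j : ℤ) : ℝ :=
  Qbar4d Δv ub Tb f j
    - (1 / 24) * (Qdisc Δv ut Tt f (j + 1) - 2 * Qdisc Δv ut Tt f j + Qdisc Δv ut Tt f (j - 1))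

def FSz (g : ℤ → ℝ) : Prop := ∀ᶠ j in Filter.cofinite, g j = 0

lemma FSz.summable {g : ℤ → ℝ} (h : FSz g) : Summable g :=
  summable_of_finite_support h

lemma FSz.shift {g : ℤ → ℝ} (h : FSz g) (k : ℤ) : FSz (fun j => g (j + k)) :=
  (add_left_injective k).tendsto_cofinite.eventually h

lemma FSz.mul {g : ℤ → ℝ} (h : FSz g) (p : ℤ → ℝ) : FSz (fun j => p j * g j) := by
  filter_upwards [h] with j hj
  simp [hj]

lemma FSz.lin {g k : ℤ → ℝ} (h : FSz g) (h' : FSz k) (a b : ℝ) :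
    FSz (fun j => a * g j + b * k j) := by
  filter_upwards [h, h'] with j hj hj'
  simp [hj, hj']

lemma tsum_shift (g : ℤ → ℝ) (k : ℤ) : ∑' j, g (j + k) = ∑' j, g j :=
  (Equiv.addRight k).tsum_eq g

lemma tsum_lin {g k : ℤ → ℝ} (h : FSz g) (h' : FSz k) (a b : ℝ) :
    ∑' j, (a * g j + b * k j) = a * ∑' j, g j + b * ∑' j, k j := by
  rw [(h.summable.mul_left a).tsum_add (h'.summable.mul_left b), tsum_mul_left, tsum_mul_left]

/-- summation by parts, backward difference -/
lemma tsum_parts {g : ℤ → ℝ} (h : FSz g) (p : ℤ → ℝ) :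
    ∑' j, p j * (g j - g (j - 1)) = ∑' j, (p j - p (j + 1)) * g j := by
  have h1 : FSz (fun j => p (j + 1) * g j) := h.mul _
  have h2 := h1.shift (-1)
  have e := tsum_lin (h.mul p) h2 1 (-1)
  have e' := tsum_lin (h.mul p) h1 1 (-1)
  rw [tsum_shift (fun j => p (j + 1) * g j) (-1), ← e'] at e
  convert e using 1
  · refine tsum_congr fun j => ?_
    rw [neg_add_cancel_right, ← sub_eq_add_neg]; ring
  · refine tsum_congr fun j => ?_
    ring

/-- Discrete conservation of mass, momentum and kinetic energy for the fourth-order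
discretization of the Fokker–Planck operator. -/
theorem stmt6 (Δv n ut Tt ub Tb : ℝ) (hΔv : 0 < Δv) (f : ℤ → ℝ)
    (hf : (Function.support f).Finite)
    (hn : n = Δv * ∑' j : ℤ, f j)
    (hut : n * ut = Δv * ∑' j : ℤ, vhalf Δv j * fhalf f j)
    (hTt : n * Tt = Δv * ∑' j : ℤ, (vhalf Δv j - ut) ^ 2 * fhalf f j)
    (hub : n * ub = Δv * ∑' j : ℤ, vhalf Δv j * fbreveHalf f j)
    (hTb : n * Tb = Δv * ∑' j : ℤ, (vhalf Δv j - ub) ^ 2 * fbreveHalf f j) :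
    Δv * ∑' j : ℤ, Q4d Δv ut Tt ub Tb f j = 0 ∧
    Δv * ∑' j : ℤ, vgrid Δv j * Q4d Δv ut Tt ub Tb f j = 0 ∧
    Δv * ∑' j : ℤ, (vgrid Δv j ^ 2 / 2) * Q4d Δv ut Tt ub Tb f j = 0 := by
  have hd : Δv ≠ 0 := hΔv.ne'
  have f0 : FSz f := hf
  have fk : ∀ k : ℤ, FSz (fun j => f (j + k)) := fun k => f0.shift k
  have hb : FSz (fbreveHalf f) := by
    filter_upwards [fk (-1), f0, fk 1, fk 2] with j h1 h2 h3 h4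
    simp only [← sub_eq_add_neg] at h1
    simp [fbreveHalf, h1, h2, h3, h4]
  have hb0 : ∑' j, fbreveHalf f j = ∑' j, f j := by
    have e := tsum_lin ((fk (-1)).lin f0 (-1/16) (9/16)) ((fk 1).lin (fk 2) (9/16) (-1/16)) 1 1
    rw [tsum_lin (fk (-1)) f0, tsum_lin (fk 1) (fk 2), tsum_shift, tsum_shift, tsum_shift] at e
    have e2 : ∑' j, fbreveHalf f j = _ :=
      Eq.trans (tsum_congr fun j => by simp only [fbreveHalf, sub_eq_add_neg]; ring) e
    rw [e2]; ring
  -- second-order flux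
  let H : ℤ → ℝ := fun j => (1 / Δv) * (fhalf f j * (vhalf Δv j - ut))
    + (Tt / Δv ^ 2) * (f (j + 1) - f j)
  have hH : FSz H := by
    filter_upwards [f0, fk 1] with j h1 h2
    simp [H, fhalf, h1, h2]
  have hQH : ∀ j, Qdisc Δv ut Tt f j = 1 * (H j - H (j - 1)) := by
    intro j
    simp only [Qdisc, H, sub_add_cancel]
    ring
  have hQ : FSz (Qdisc Δv ut Tt f) := by
    filter_upwards [hH, hH.shift (-1)] with j h1 h2
    rw [← sub_eq_add_neg] at h2
    rw [hQH, h1, h2]; simp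
  have hQ0 : ∑' j, Qdisc Δv ut Tt f j = 0 := by
    rw [tsum_congr hQH, tsum_parts hH (fun _ => 1)]
    simp
  let R : ℤ → ℝ := fun j => Tb / (24 * Δv ^ 2) * (-f (j + 1) + 26 * f j - f (j - 1))
  have hR : FSz R := by
    filter_upwards [f0, fk 1, fk (-1)] with j h1 h2 h3
    rw [← sub_eq_add_neg] at h3
    simp [R, h1, h2, h3]
  have hR0 : ∑' j, R j = Tb / Δv ^ 2 * ∑' j, f j := by
    have e := tsum_lin ((fk 1).lin f0 (-1) 26) (fk (-1)) (Tb / (24 * Δv ^ 2))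
      (-(Tb / (24 * Δv ^ 2)))
    rw [tsum_lin (fk 1) f0, tsum_shift, tsum_shift] at e
    have e2 : ∑' j, R j = _ := Eq.trans (tsum_congr fun j => ?_) e
    · rw [e2]; field_simp; ring
    · simp only [R, sub_eq_add_neg]; ring
  let P : ℤ → ℝ := fun j => 1 * R j + (-1 / 24) * Qdisc Δv ut Tt f j
  have hP : FSz P := hR.lin hQ _ _
  have hP0 : ∑' j, P j = Tb / Δv ^ 2 * ∑' j, f j := by
    rw [tsum_lin hR hQ, hQ0, hR0]; ring
  let D : ℤ → ℝ := fun j => P (j + 1) - P j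
  have hD : FSz D := by
    filter_upwards [hP, hP.shift 1] with j h1 h2
    simp [D, h1, h2]
  have hDp : ∀ p : ℤ → ℝ, ∑' j, p j * D j = ∑' j, (p (j - 1) - p j) * P j := by
    intro p
    have e := tsum_parts (hP.shift 1) p
    have e2 := tsum_shift (fun j => (p (j - 1) - p j) * P j) 1
    simp only [sub_add_cancel, add_sub_cancel_right] at e e2
    rw [← e2, ← e]
  let A : ℤ → ℝ := fun j => (vhalf Δv j - ub) * fbreveHalf f j
  have hA : FSz A := hb.mul _
  let K : ℤ → ℝ := fun j => (1 / Δv) * A j + 1 * D j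
  have hK : FSz K := hA.lin hD _ _
  have hQK : ∀ j, Q4d Δv ut Tt ub Tb f j = K j - K (j - 1) := by
    intro j
    have a1 : j + 1 + 1 = j + 2 := by ring
    have a2 : j - 1 - 1 = j - 2 := by ring
    simp only [Q4d, Qbar4d, K, D, P, R, A, sub_add_cancel, add_sub_cancel_right, a1, a2]
    field_simp
    ring
  have hvb : FSz (fun j => vhalf Δv j * fbreveHalf f j) := hb.mul _
  have hA0 : ∑' j, A j = 0 := by
    have e := tsum_lin hvb hb 1 (-ub)
    have e2 : ∑' j, A j = _ := Eq.trans (tsum_congr fun j => by simp only [A]; ring) e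
    rw [e2, hb0]
    apply mul_left_cancel₀ hd
    rw [hn] at hub
    linarith
  have hv : ∀ j, vgrid Δv (j + 1) = vgrid Δv j + Δv := by
    intro j; simp only [vgrid]; push_cast; ring
  have hv' : ∀ j, vhalf Δv (j - 1) - vhalf Δv j = -Δv := by
    intro j; simp only [vhalf, vgrid]; push_cast; ring
  have hK0 : ∑' j, K j = 0 := by
    rw [tsum_lin hA hD, hA0]
    have := hDp (fun _ => 1)
    simp only [one_mul, sub_self, zero_mul, tsum_zero] at this
    rw [this]; simp
  have hvK : ∑' j, vhalf Δv j * K j = 0 := by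
    have hs : FSz (fun j => (vhalf Δv j - ub) ^ 2 * fbreveHalf f j) := hb.mul _
    have e := tsum_lin (hs.lin hA 1 ub) (hD.mul (vhalf Δv)) (1 / Δv) 1
    rw [tsum_lin hs hA, hA0, hDp] at e
    simp only [hv'] at e
    rw [tsum_mul_left, hP0] at e
    have e2 : ∑' j, vhalf Δv j * K j = _ :=
      Eq.trans (tsum_congr fun j => by simp only [K, A]; ring) e
    rw [e2]
    have hT : ∑' j, (vhalf Δv j - ub) ^ 2 * fbreveHalf f j = Tb * ∑' j, f j := by
      apply mul_left_cancel₀ hd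
      rw [← hTb, hn]; ring
    rw [hT]
    field_simp
    ring
  refine ⟨?_, ?_, ?_⟩
  · have e := tsum_parts hK (fun _ => 1)
    simp only [one_mul, sub_self, zero_mul, tsum_zero] at e
    simp only [hQK, e, mul_zero]
  · simp only [hQK]
    rw [tsum_parts hK (vgrid Δv)]
    have : ∀ j, (vgrid Δv j - vgrid Δv (j + 1)) * K j = -Δv * K j := by
      intro j; rw [hv]; ring
    rw [tsum_congr this, tsum_mul_left, hK0]; simp
  · simp only [hQK]
    rw [tsum_parts hK (fun j => vgrid Δv j ^ 2 / 2)]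
    have : ∀ j, (vgrid Δv j ^ 2 / 2 - vgrid Δv (j + 1) ^ 2 / 2) * K j
        = -Δv * (vhalf Δv j * K j) := by
      intro j; simp only [vhalf]; rw [hv]; ring
    rw [tsum_congr this, tsum_mul_left, hvK]; simp

end
end

section
/- Let Δv > 0, let f : ℤ → ℝ be finitely supported, and define the five-point discrete second-derivative operator (Df)_j = (−f_{j−2} + 28f_{j−1} − 54f_j + 28f_{j+1} − f_{j+2})/(24Δv²). Then Δv·∑_{j∈ℤ} (v_j²/2)·(Df)_j = Δv·∑_{j∈ℤ} f_j. -/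
noncomputable section

/-- Five-point discrete second-derivative operator
`(Df)_j = (−f_{j−2} + 28f_{j−1} − 54f_j + 28f_{j+1} − f_{j+2})/(24Δv²)`. -/
def D5 (Δv : ℝ) (f : ℤ → ℝ) (j : ℤ) : ℝ :=
  (-f (j - 2) + 28 * f (j - 1) - 54 * f j + 28 * f (j + 1) - f (j + 2)) / (24 * Δv ^ 2)

/-- Discrete double integration by parts for the five-point second derivative:
`Δv·∑_j (v_j²/2)(Df)_j = Δv·∑_j f_j`. -/
theorem stmt8 (Δv : ℝ) (hΔv : 0 < Δv) (f : ℤ → ℝ)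
    (hf : (Function.support f).Finite) :
    Δv * ∑' j : ℤ, (vgrid Δv j ^ 2 / 2) * D5 Δv f j = Δv * ∑' j : ℤ, f j := by
  have key : ∀ k : ℤ, HasSum (fun j : ℤ => (j : ℝ) ^ 2 * f (j - k))
      (∑' j : ℤ, ((j : ℝ) + k) ^ 2 * f j) := by
    intro k
    have hs : Summable (fun j : ℤ => ((j : ℝ) + k) ^ 2 * f j) := by
      apply summable_of_hasFiniteSupport
      refine hf.subset ?_
      intro j hj
      simp only [Function.mem_support] at hj ⊢
      exact right_ne_zero_of_mul hj
    have h := (Equiv.subRight k).hasSum_iff.mpr hs.hasSum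
    convert h using 1
    funext j
    simp
  have mom : ∀ n : ℕ, Summable (fun j : ℤ => (j : ℝ) ^ n * f j) := by
    intro n
    apply summable_of_hasFiniteSupport
    refine hf.subset ?_
    intro j hj
    simp only [Function.mem_support] at hj ⊢
    exact right_ne_zero_of_mul hj
  have ex : ∀ k : ℤ, (∑' j : ℤ, ((j : ℝ) + k) ^ 2 * f j)
      = (∑' j : ℤ, (j : ℝ) ^ 2 * f j) + 2 * k * (∑' j : ℤ, (j : ℝ) ^ 1 * f j)
        + k ^ 2 * (∑' j : ℤ, (j : ℝ) ^ 0 * f j) := by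
    intro k
    have h := ((mom 2).hasSum.add ((mom 1).hasSum.mul_left (2 * (k : ℝ)))).add
      ((mom 0).hasSum.mul_left ((k : ℝ) ^ 2))
    rw [← h.tsum_eq]
    congr 1
    funext j
    ring
  have h := (((((key 2).neg.add ((key 1).mul_left 28)).sub ((key 0).mul_left 54)).add
    ((key (-1)).mul_left 28)).sub (key (-2))).mul_left (1 / 48)
  have hne : Δv ≠ 0 := hΔv.ne'
  congr 1
  have e : ∀ j : ℤ, (vgrid Δv j ^ 2 / 2) * D5 Δv f j = 1 / 48 * (-((j : ℝ) ^ 2 * f (j - 2))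
      + 28 * ((j : ℝ) ^ 2 * f (j - 1)) - 54 * ((j : ℝ) ^ 2 * f (j - 0))
      + 28 * ((j : ℝ) ^ 2 * f (j - -1)) - (j : ℝ) ^ 2 * f (j - -2)) := by
    intro j
    simp only [vgrid, D5, sub_neg_eq_add, sub_zero]
    field_simp
    ring
  rw [tsum_congr e, h.tsum_eq]
  simp only [ex]
  simp only [pow_zero, one_mul]
  push_cast
  ring

end
end

section
/- Let Δv > 0 and let Q be a map sending each finitely supported sequence g : ℤ → ℝ to a finitely supported sequence Q(g) : ℤ → ℝ such that for every g: ∑_{j∈ℤ} Q(g)_j = 0, ∑_{j∈ℤ} v_j Q(g)_j = 0, and ∑_{j∈ℤ} v_j² Q(g)_j = 0. Let s ≥ 2 be an integer, η ≥ 0, Δt ∈ ℝ, and define ω₀ = 1 + η/s², ω₁ = T_s(ω₀)/T_s'(ω₀), μ₁ = ω₁/ω₀, and for 2 ≤ ℓ ≤ s: μ_ℓ = 2ω₁T_{ℓ−1}(ω₀)/T_ℓ(ω₀), ν_ℓ = 2ω₀T_{ℓ−1}(ω₀)/T_ℓ(ω₀), κ_ℓ = 1 − ν_ℓ, where T_k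 denotes the k-th Chebyshev polynomial of the first kind. Given a finitely supported f⁰ : ℤ → ℝ, define the RKC1 stages by K⁽⁰⁾ = f⁰, K⁽¹⁾ = K⁽⁰⁾ + μ₁Δt·Q(K⁽⁰⁾), and K⁽ℓ⁾ = κ_ℓK⁽ℓ⁻²⁾ + ν_ℓK⁽ℓ⁻¹⁾ + μ_ℓΔt·Q(K⁽ℓ⁻¹⁾) for 2 ≤ ℓ ≤ s, and set f¹ = K⁽ˢ⁾. Then ∑_{j∈ℤ} f¹_j = ∑_{j∈ℤ} f⁰_j, ∑_{j∈ℤ} v_j f¹_j = ∑_{j∈ℤ} v_j f⁰_j, and ∑_{j∈ℤ} (v_j²/2) f¹_j = ∑_{j∈ℤ} (v_j²/2) f⁰_j. -/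
noncomputable section

/-- Evaluation of the `k`-th Chebyshev polynomial of the first kind. -/
def chebT (k : ℕ) (x : ℝ) : ℝ := (Polynomial.Chebyshev.T ℝ k).eval x

/-- Evaluation of the derivative of the `k`-th Chebyshev polynomial of the first kind. -/
def chebT' (k : ℕ) (x : ℝ) : ℝ :=
  (Polynomial.derivative (Polynomial.Chebyshev.T ℝ k)).eval x

theorem tsum_comb (w a b c : ℤ → ℝ) (x y z : ℝ) (ha : (Function.support a).Finite)
    (hb : (Function.support b).Finite) (hc : (Function.support c).Finite) :
    (Function.support (fun j => x * a j + y * b j + z * c j)).Finite ∧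
    ∑' j : ℤ, w j * (x * a j + y * b j + z * c j) =
      x * ∑' j : ℤ, w j * a j + y * ∑' j : ℤ, w j * b j + z * ∑' j : ℤ, w j * c j := by
  have key : ∀ g : ℤ → ℝ, (Function.support g).Finite → Summable (fun j => w j * g j) := by
    intro g hg
    apply summable_of_hasFiniteSupport
    refine hg.subset ?_
    intro j hj h
    exact hj (by simp [h])
  constructor
  · refine ((ha.union hb).union hc).subset ?_
    intro j hj
    by_contra h
    simp only [Set.mem_union, Function.mem_support, not_or, not_not] at h
    exact hj (by simp [h.1.1, h.1.2, h.2])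
  · rw [← tsum_mul_left, ← tsum_mul_left, ← tsum_mul_left,
      ← Summable.tsum_add ((key a ha).mul_left x) ((key b hb).mul_left y),
      ← Summable.tsum_add (((key a ha).mul_left x).add ((key b hb).mul_left y))
        ((key c hc).mul_left z)]
    exact tsum_congr fun j => by ring

/-- One step of the first-order RKC method preserves the discrete mass, momentum
and kinetic energy, provided the discretized collision operator `Q` does. -/
theorem stmt9 (Δv : ℝ) (hΔv : 0 < Δv)
    (Q : (ℤ → ℝ) → (ℤ → ℝ))
    (hQfin : ∀ g : ℤ → ℝ, (Function.support g).Finite → (Function.support (Q g)).Finite)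
    (hQmass : ∀ g : ℤ → ℝ, (Function.support g).Finite → ∑' j : ℤ, Q g j = 0)
    (hQmom : ∀ g : ℤ → ℝ, (Function.support g).Finite →
      ∑' j : ℤ, vgrid Δv j * Q g j = 0)
    (hQen : ∀ g : ℤ → ℝ, (Function.support g).Finite →
      ∑' j : ℤ, vgrid Δv j ^ 2 * Q g j = 0)
    (s : ℕ) (hs : 2 ≤ s) (η : ℝ) (hη : 0 ≤ η) (Δt : ℝ)
    (ω₀ ω₁ μ₁ : ℝ) (μ ν κ : ℕ → ℝ)
    (hω₀ : ω₀ = 1 + η / (s : ℝ) ^ 2)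
    (hω₁ : ω₁ = chebT s ω₀ / chebT' s ω₀)
    (hμ₁ : μ₁ = ω₁ / ω₀)
    (hμ : ∀ ℓ : ℕ, 2 ≤ ℓ → ℓ ≤ s → μ ℓ = 2 * ω₁ * chebT (ℓ - 1) ω₀ / chebT ℓ ω₀)
    (hν : ∀ ℓ : ℕ, 2 ≤ ℓ → ℓ ≤ s → ν ℓ = 2 * ω₀ * chebT (ℓ - 1) ω₀ / chebT ℓ ω₀)
    (hκ : ∀ ℓ : ℕ, 2 ≤ ℓ → ℓ ≤ s → κ ℓ = 1 - ν ℓ)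
    (f0 : ℤ → ℝ) (hf0 : (Function.support f0).Finite)
    (K : ℕ → ℤ → ℝ)
    (hK0 : K 0 = f0)
    (hK1 : ∀ j : ℤ, K 1 j = K 0 j + μ₁ * Δt * Q (K 0) j)
    (hKl : ∀ ℓ : ℕ, 2 ≤ ℓ → ℓ ≤ s → ∀ j : ℤ,
      K ℓ j = κ ℓ * K (ℓ - 2) j + ν ℓ * K (ℓ - 1) j + μ ℓ * Δt * Q (K (ℓ - 1)) j)
    (f1 : ℤ → ℝ) (hf1 : f1 = K s) :
    (∑' j : ℤ, f1 j = ∑' j : ℤ, f0 j) ∧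
    (∑' j : ℤ, vgrid Δv j * f1 j = ∑' j : ℤ, vgrid Δv j * f0 j) ∧
    (∑' j : ℤ, (vgrid Δv j ^ 2 / 2) * f1 j = ∑' j : ℤ, (vgrid Δv j ^ 2 / 2) * f0 j) := by
  have main : ∀ w : ℤ → ℝ,
      (∀ g : ℤ → ℝ, (Function.support g).Finite → ∑' j : ℤ, w j * Q g j = 0) →
      ∑' j : ℤ, w j * f1 j = ∑' j : ℤ, w j * f0 j := by
    intro w hw
    have ind : ∀ n : ℕ, n ≤ s → (Function.support (K n)).Finite ∧
        ∑' j : ℤ, w j * K n j = ∑' j : ℤ, w j * f0 j := by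
      intro n
      induction n using Nat.strong_induction_on with
      | _ n ih =>
        intro hn
        match n, ih, hn with
        | 0, _, _ => rw [hK0]; exact ⟨hf0, rfl⟩
        | 1, ih, _ =>
          obtain ⟨h1, h2⟩ := ih 0 (by omega) (by omega)
          have e : K 1 = fun j => 1 * K 0 j + 0 * K 0 j + (μ₁ * Δt) * Q (K 0) j := by
            funext j; rw [hK1]; ring
          obtain ⟨h3, h4⟩ := tsum_comb w (K 0) (K 0) (Q (K 0)) 1 0 (μ₁ * Δt) h1 h1 (hQfin _ h1)
          rw [e]
          refine ⟨h3, ?_⟩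
          rw [h4, hw _ h1, h2]; ring
        | m + 2, ih, hn =>
          obtain ⟨h1, h2⟩ := ih m (by omega) (by omega)
          obtain ⟨h1', h2'⟩ := ih (m + 1) (by omega) (by omega)
          have e : K (m + 2) = fun j => κ (m + 2) * K m j + ν (m + 2) * K (m + 1) j
              + (μ (m + 2) * Δt) * Q (K (m + 1)) j := by
            funext j; exact hKl (m + 2) (by omega) hn j
          obtain ⟨h3, h4⟩ := tsum_comb w (K m) (K (m + 1)) (Q (K (m + 1))) (κ (m + 2))
            (ν (m + 2)) (μ (m + 2) * Δt) h1 h1' (hQfin _ h1')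
          rw [e]
          refine ⟨h3, ?_⟩
          rw [h4, hw _ h1', h2, h2', hκ (m + 2) (by omega) hn]; ring
    rw [hf1]
    exact (ind s le_rfl).2
  refine ⟨?_, main _ hQmom, main _ ?_⟩
  · simpa using main (fun _ => 1) (by simpa using hQmass)
  · intro g hg
    have : ∀ j, vgrid Δv j ^ 2 / 2 * Q g j = 1 / 2 * (vgrid Δv j ^ 2 * Q g j) :=
      fun j => by ring
    simp_rw [this]
    rw [tsum_mul_left, hQen g hg, mul_zero]

end
end

section
/- Let Δv > 0 and let Q be a map sending each finitely supported sequence g : ℤ → ℝ to a finitely supported sequence Q(g) : ℤ → ℝ such that for every g: ∑_{j∈ℤ} Q(g)_j = 0, ∑_{j∈ℤ} v_j Q(g)_j = 0, and ∑_{j∈ℤ} v_j² Q(g)_j = 0. Let s ≥ 2 be an integer, η ≥ 0, Δt ∈ ℝ, ω₀ = 1 + η/s², ω₂ = T_s'(ω₀)/T_s''(ω₀), and let b₀, b₁ be arbitrary nonzero reals and μ̂₁ an arbitrary real; for 2 ≤ ℓ ≤ s define b_ℓ = T_ℓ''(ω₀)/(T_ℓ'(ω₀))², a_ℓ = 1 −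 b_ℓT_ℓ(ω₀), μ̂_ℓ = 2b_ℓω₂/b_{ℓ−1}, ν̂_ℓ = 2b_ℓω₀/b_{ℓ−1}, κ̂_ℓ = −b_ℓ/b_{ℓ−2}, with T_k the k-th Chebyshev polynomial of the first kind. Given a finitely supported f⁰ : ℤ → ℝ, define the RKC2 stages by K⁽⁰⁾ = f⁰, K⁽¹⁾ = K⁽⁰⁾ + μ̂₁Δt·Q(K⁽⁰⁾), and K⁽ℓ⁾ = (1 − κ̂_ℓ − ν̂_ℓ)K⁽⁰⁾ + κ̂_ℓK⁽ℓ⁻²⁾ + ν̂_ℓK⁽ℓ⁻¹⁾ + μ̂_ℓΔt·Q(K⁽ℓ⁻¹⁾) − a_{ℓ−1}μ̂_ℓΔt·Q(K⁽⁰⁾) for 2 ≤ ℓ ≤ s, and set f¹ = K⁽ˢ⁾. Then ∑_{j∈ℤ} f¹_j = ∑_{j∈ℤ} f⁰_j, ∑_{j∈ℤ} v_j f¹_j = ∑_{j∈ℤ} v_j f⁰_j, and ∑_{j∈ℤ} (v_j²/2) f¹_j = ∑_{j∈ℤ} (v_j²/2) f⁰_j. -/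
noncomputable section

/-- Evaluation of the second derivative of the `k`-th Chebyshev polynomial. -/
def chebT'' (k : ℕ) (x : ℝ) : ℝ :=
  (Polynomial.derivative (Polynomial.derivative (Polynomial.Chebyshev.T ℝ k))).eval x

theorem rkc_aux (Q : (ℤ → ℝ) → (ℤ → ℝ)) (w : ℤ → ℝ)
    (hQfin : ∀ g : ℤ → ℝ, (Function.support g).Finite → (Function.support (Q g)).Finite)
    (hQ : ∀ g : ℤ → ℝ, (Function.support g).Finite → ∑' j : ℤ, w j * Q g j = 0)
    (s : ℕ) (Δt μh₁ : ℝ) (a μh νh κh : ℕ → ℝ)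
    (K : ℕ → ℤ → ℝ) (hf0 : (Function.support (K 0)).Finite)
    (hK1 : ∀ j : ℤ, K 1 j = K 0 j + μh₁ * Δt * Q (K 0) j)
    (hKl : ∀ ℓ : ℕ, 2 ≤ ℓ → ℓ ≤ s → ∀ j : ℤ,
      K ℓ j = (1 - κh ℓ - νh ℓ) * K 0 j + κh ℓ * K (ℓ - 2) j + νh ℓ * K (ℓ - 1) j
        + μh ℓ * Δt * Q (K (ℓ - 1)) j - a (ℓ - 1) * μh ℓ * Δt * Q (K 0) j) :
    ∀ ℓ : ℕ, ℓ ≤ s → (Function.support (K ℓ)).Finite ∧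
      HasSum (fun j => w j * K ℓ j) (∑' j : ℤ, w j * K 0 j) := by
  have hsm : ∀ g : ℤ → ℝ, (Function.support g).Finite → Summable (fun j => w j * g j) := by
    intro g hg
    apply summable_of_hasFiniteSupport
    refine hg.subset ?_
    intro j hj hgj
    exact hj (by simp [hgj])
  have hQs : ∀ g : ℤ → ℝ, (Function.support g).Finite → HasSum (fun j => w j * Q g j) 0 := by
    intro g hg
    have h := (hsm _ (hQfin g hg)).hasSum
    rwa [hQ g hg] at h
  have h0 := (hsm _ hf0).hasSum
  intro ℓ
  induction ℓ using Nat.strong_induction_on with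
  | _ ℓ ih =>
    intro hl
    rcases Nat.lt_or_ge ℓ 2 with h2 | h2
    · interval_cases ℓ
      · exact ⟨hf0, h0⟩
      · refine ⟨(hf0.union (hQfin _ hf0)).subset ?_, ?_⟩
        · intro j hj
          by_contra hc
          simp only [Set.mem_union, Function.mem_support, not_or, not_not] at hc
          exact hj (by rw [hK1, hc.1, hc.2]; ring)
        · have h := h0.add ((hQs _ hf0).mul_left (μh₁ * Δt))
          convert h using 1
          · funext j
            rw [hK1]; ring
          · ring
    · obtain ⟨f1, s1⟩ := ih (ℓ - 1) (by omega) (by omega)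
      obtain ⟨f2, s2⟩ := ih (ℓ - 2) (by omega) (by omega)
      refine ⟨((((hf0.union f2).union f1).union (hQfin _ f1)).union (hQfin _ hf0)).subset ?_, ?_⟩
      · intro j hj
        by_contra hc
        simp only [Set.mem_union, Function.mem_support, not_or, not_not] at hc
        obtain ⟨⟨⟨⟨c1, c2⟩, c3⟩, c4⟩, c5⟩ := hc
        exact hj (by rw [hKl ℓ h2 hl, c1, c2, c3, c4, c5]; ring)
      · have h := ((((h0.mul_left (1 - κh ℓ - νh ℓ)).add (s2.mul_left (κh ℓ))).add
          (s1.mul_left (νh ℓ))).add ((hQs _ f1).mul_left (μh ℓ * Δt))).sub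
          ((hQs _ hf0).mul_left (a (ℓ - 1) * μh ℓ * Δt))
        convert h using 1
        · rfl
        · funext j
          rw [hKl ℓ h2 hl]; ring
        · ring

/-- One step of the second-order RKC method preserves the discrete mass, momentum
and kinetic energy, provided the discretized collision operator `Q` does. -/
theorem stmt10 (Δv : ℝ) (hΔv : 0 < Δv)
    (Q : (ℤ → ℝ) → (ℤ → ℝ))
    (hQfin : ∀ g : ℤ → ℝ, (Function.support g).Finite → (Function.support (Q g)).Finite)
    (hQmass : ∀ g : ℤ → ℝ, (Function.support g).Finite → ∑' j : ℤ, Q g j = 0)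
    (hQmom : ∀ g : ℤ → ℝ, (Function.support g).Finite →
      ∑' j : ℤ, vgrid Δv j * Q g j = 0)
    (hQen : ∀ g : ℤ → ℝ, (Function.support g).Finite →
      ∑' j : ℤ, vgrid Δv j ^ 2 * Q g j = 0)
    (s : ℕ) (hs : 2 ≤ s) (η : ℝ) (hη : 0 ≤ η) (Δt : ℝ)
    (ω₀ ω₂ μh₁ : ℝ) (b a μh νh κh : ℕ → ℝ)
    (hω₀ : ω₀ = 1 + η / (s : ℝ) ^ 2)
    (hω₂ : ω₂ = chebT' s ω₀ / chebT'' s ω₀)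
    (hb0 : b 0 ≠ 0) (hb1 : b 1 ≠ 0)
    (hb : ∀ ℓ : ℕ, 2 ≤ ℓ → ℓ ≤ s → b ℓ = chebT'' ℓ ω₀ / (chebT' ℓ ω₀) ^ 2)
    (ha1 : a 1 = 1 - b 1 * chebT 1 ω₀)
    (ha : ∀ ℓ : ℕ, 2 ≤ ℓ → ℓ ≤ s → a ℓ = 1 - b ℓ * chebT ℓ ω₀)
    (hμh : ∀ ℓ : ℕ, 2 ≤ ℓ → ℓ ≤ s → μh ℓ = 2 * b ℓ * ω₂ / b (ℓ - 1))
    (hνh : ∀ ℓ : ℕ, 2 ≤ ℓ → ℓ ≤ s → νh ℓ = 2 * b ℓ * ω₀ / b (ℓ - 1))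
    (hκh : ∀ ℓ : ℕ, 2 ≤ ℓ → ℓ ≤ s → κh ℓ = -(b ℓ / b (ℓ - 2)))
    (f0 : ℤ → ℝ) (hf0 : (Function.support f0).Finite)
    (K : ℕ → ℤ → ℝ)
    (hK0 : K 0 = f0)
    (hK1 : ∀ j : ℤ, K 1 j = K 0 j + μh₁ * Δt * Q (K 0) j)
    (hKl : ∀ ℓ : ℕ, 2 ≤ ℓ → ℓ ≤ s → ∀ j : ℤ,
      K ℓ j = (1 - κh ℓ - νh ℓ) * K 0 j + κh ℓ * K (ℓ - 2) j + νh ℓ * K (ℓ - 1) j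
        + μh ℓ * Δt * Q (K (ℓ - 1)) j - a (ℓ - 1) * μh ℓ * Δt * Q (K 0) j)
    (f1 : ℤ → ℝ) (hf1 : f1 = K s) :
    (∑' j : ℤ, f1 j = ∑' j : ℤ, f0 j) ∧
    (∑' j : ℤ, vgrid Δv j * f1 j = ∑' j : ℤ, vgrid Δv j * f0 j) ∧
    (∑' j : ℤ, (vgrid Δv j ^ 2 / 2) * f1 j = ∑' j : ℤ, (vgrid Δv j ^ 2 / 2) * f0 j) := by
  subst hf1 hK0
  refine ⟨?_, ?_, ?_⟩
  · have h := (rkc_aux Q (fun _ => 1) hQfin (by simpa using hQmass) s Δt μh₁ a μh νh κh K hf0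
      hK1 hKl s le_rfl).2.tsum_eq
    simpa using h
  · exact (rkc_aux Q (fun j => vgrid Δv j) hQfin hQmom s Δt μh₁ a μh νh κh K hf0
      hK1 hKl s le_rfl).2.tsum_eq
  · refine (rkc_aux Q (fun j => vgrid Δv j ^ 2 / 2) hQfin ?_ s Δt μh₁ a μh νh κh K hf0
      hK1 hKl s le_rfl).2.tsum_eq
    intro g hg
    have h : ∀ j : ℤ, vgrid Δv j ^ 2 / 2 * Q g j = (1 / 2) * (vgrid Δv j ^ 2 * Q g j) := by
      intro j; ring
    simp only [h]
    rw [tsum_mul_left, hQen g hg, mul_zero]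

end
end

section
/- Let N_x be a positive integer, Δx, Δv, Δt > 0, ν ∈ ℝ, and v_j = j·Δv. Let fⁿ, f⁽²⁾, Q⁽²⁾, G : (ℤ/N_xℤ) × ℤ → ℝ be grid functions that, for each fixed spatial index i, are finitely supported in the velocity index j, where G plays the role of the discrete spatial derivative D_x f⁽²⁾. Assume: (i) ∑_{i} G_{ij} = 0 for every j (periodicity of the spatial difference operator); (ii) Δv·∑_{j} v_j² Q⁽²⁾_{ij} = 0 for every i (energy conservation of the collision discretization); (iii) the velocity derivative is discretized by the centered difference (D_v f⁽²⁾)_{ij} = (f⁽²⁾_{i,j+1} − f⁽²⁾_{i,j−1})/(2Δv). Let Eⁿ : ℤ/N_xℤ → ℝ and define E^{n+1}_i = Eⁿ_i − Δt·Δv·∑_{j} v_j f⁽²⁾_{ij} (discrete Ampère update), E⁽²⁾_i = (Eⁿ_i + E^{n+1}_i)/2, and f^{n+1}_{ij} = fⁿ_{ij} + Δt·(−v_j G_{ij} − E⁽²⁾_i (D_v f⁽²⁾)_{ij} + ν Q⁽²⁾_{ij}). Define the discrete kinetic energy 𝓔ⁿ_kin = (Δx·Δv/2)·∑_{i,j}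 v_j² fⁿ_{ij} and similarly 𝓔^{n+1}_kin for f^{n+1}. Then the total discrete energy is exactly conserved: 𝓔^{n+1}_kin + (Δx/2)·∑_i (E^{n+1}_i)² = 𝓔ⁿ_kin + (Δx/2)·∑_i (Eⁿ_i)². -/
noncomputable section

/-- Exact conservation of the total discrete energy (kinetic + electric) for the
midpoint Runge–Kutta / Ampère scheme with the time-averaged electric field
`E⁽²⁾ = (Eⁿ + E^{n+1})/2`. -/
theorem stmt11 (Nx : ℕ) (hNx : 0 < Nx) (Δx Δv Δt ν : ℝ)
    (hΔx : 0 < Δx) (hΔv : 0 < Δv) (hΔt : 0 < Δt)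
    (fn f2 Qc G : Fin Nx → ℤ → ℝ)
    (hfn : ∀ i, (Function.support (fn i)).Finite)
    (hf2 : ∀ i, (Function.support (f2 i)).Finite)
    (hQcfin : ∀ i, (Function.support (Qc i)).Finite)
    (hGfin : ∀ i, (Function.support (G i)).Finite)
    (hG : ∀ j : ℤ, ∑ i : Fin Nx, G i j = 0)
    (hQc : ∀ i, Δv * ∑' j : ℤ, vgrid Δv j ^ 2 * Qc i j = 0)
    (En Enp1 E2 : Fin Nx → ℝ)
    (hEnp1 : ∀ i, Enp1 i = En i - Δt * (Δv * ∑' j : ℤ, vgrid Δv j * f2 i j))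
    (hE2 : ∀ i, E2 i = (En i + Enp1 i) / 2)
    (fnp1 : Fin Nx → ℤ → ℝ)
    (hfnp1 : ∀ i j, fnp1 i j = fn i j
      + Δt * (-(vgrid Δv j) * G i j
        - E2 i * ((f2 i (j + 1) - f2 i (j - 1)) / (2 * Δv))
        + ν * Qc i j)) :
    (Δx * Δv / 2) * ∑ i : Fin Nx, ∑' j : ℤ, vgrid Δv j ^ 2 * fnp1 i j
      + (Δx / 2) * ∑ i : Fin Nx, Enp1 i ^ 2
    = (Δx * Δv / 2) * ∑ i : Fin Nx, ∑' j : ℤ, vgrid Δv j ^ 2 * fn i j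
      + (Δx / 2) * ∑ i : Fin Nx, En i ^ 2 := by
  have hS : ∀ (w g : ℤ → ℝ), (Function.support g).Finite → Summable (fun j => w j * g j) := by
    intro w g hg
    apply summable_of_finite_support
    refine hg.subset ?_
    intro j hj
    simp only [Function.mem_support] at hj ⊢
    exact right_ne_zero_of_mul hj
  have hQ0 : ∀ i, ∑' j : ℤ, vgrid Δv j ^ 2 * Qc i j = 0 := fun i =>
    (mul_eq_zero.mp (hQc i)).resolve_left hΔv.ne'
  have hG0 : ∑ i : Fin Nx, ∑' j : ℤ, vgrid Δv j ^ 3 * G i j = 0 := by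
    rw [← Summable.tsum_finsetSum (fun i _ => hS _ _ (hGfin i))]
    simp [← Finset.mul_sum, hG]
  have hD : ∀ i, HasSum (fun j : ℤ => vgrid Δv j ^ 2 * ((f2 i (j + 1) - f2 i (j - 1)) / (2 * Δv)))
      (-2 * ∑' j : ℤ, vgrid Δv j * f2 i j) := by
    intro i
    have h1 := (hS (fun j => vgrid Δv (j - 1) ^ 2 / (2 * Δv)) _ (hf2 i)).hasSum
    have h2 := (hS (fun j => vgrid Δv (j + 1) ^ 2 / (2 * Δv)) _ (hf2 i)).hasSum
    have h3 := (hS (vgrid Δv) _ (hf2 i)).hasSum.mul_left (-2)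
    have h5 : (fun j : ℤ => -2 * (vgrid Δv j * f2 i j)) = fun j =>
        vgrid Δv (j - 1) ^ 2 / (2 * Δv) * f2 i j - vgrid Δv (j + 1) ^ 2 / (2 * Δv) * f2 i j := by
      funext j
      simp only [vgrid]
      push_cast
      field_simp
      ring
    rw [h5] at h3
    have h4 := h3.unique (h1.sub h2)
    · have h1' := (Equiv.addRight (1 : ℤ)).hasSum_iff.mpr h1
      have h2' := (Equiv.subRight (1 : ℤ)).hasSum_iff.mpr h2
      rw [h4]
      refine Eq.mp (congrArg (fun g => HasSum g _) ?_) (h1'.sub h2')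
      funext j
      simp
      ring
  have hK : ∀ i, ∑' j : ℤ, vgrid Δv j ^ 2 * fnp1 i j = (∑' j : ℤ, vgrid Δv j ^ 2 * fn i j)
      - Δt * (∑' j : ℤ, vgrid Δv j ^ 3 * G i j)
      + 2 * Δt * E2 i * ∑' j : ℤ, vgrid Δv j * f2 i j := by
    intro i
    have a := (hS (fun j => vgrid Δv j ^ 2) _ (hfn i)).hasSum
    have b := ((hS (fun j => vgrid Δv j ^ 3) _ (hGfin i)).hasSum).mul_left Δt
    have c := (hD i).mul_left (Δt * E2 i)
    have d := ((hS (fun j => vgrid Δv j ^ 2) _ (hQcfin i)).hasSum).mul_left (Δt * ν)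
    rw [hQ0 i] at d
    have e := ((a.sub b).sub c).add d
    refine Eq.trans ?_ (e.tsum_eq.trans (by ring))
    congr 1
    funext j
    rw [hfnp1]
    ring
  simp only [hK, Finset.sum_add_distrib, Finset.sum_sub_distrib, ← Finset.mul_sum, hG0]
  have hE : ∑ i, Enp1 i ^ 2 = ∑ i, En i ^ 2
      - Δv * ∑ i, 2 * Δt * E2 i * ∑' j : ℤ, vgrid Δv j * f2 i j := by
    rw [Finset.mul_sum, ← Finset.sum_sub_distrib]
    refine Finset.sum_congr rfl fun i _ => ?_
    rw [hE2, hEnp1]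
    ring
  rw [hE]
  ring

end
end

section
/- Let Δv_x, Δv_y > 0, set v_{x,i} = i·Δv_x and v_{y,j} = j·Δv_y for i, j ∈ ℤ, and let f : ℤ × ℤ → ℝ be finitely supported. Write f_{i+1/2,j} = (f_{i+1,j} + f_{i,j})/2, f_{i,j+1/2} = (f_{i,j+1} + f_{i,j})/2, v_{x,i+1/2} = (v_{x,i} + v_{x,i+1})/2, v_{y,j+1/2} = (v_{y,j} + v_{y,j+1})/2. Let n, ũ_x, ũ_y, T̃ ∈ ℝ satisfy n = ∑_{i,j} f_{i,j}Δv_xΔv_y, n·ũ_x = ∑_{i,j} v_{x,i+1/2}f_{i+1/2,j}Δv_xΔv_y, n·ũ_y = ∑_{i,j} v_{y,j+1/2}f_{i,j+1/2}Δv_xΔv_y, and 2n·T̃ = ∑_{i,j} (v_{x,i+1/2} − ũ_x)²f_{i+1/2,j}Δv_xΔv_y + ∑_{i,j} (v_{y,j+1/2} − ũ_y)²f_{i,j+1/2}Δv_xΔv_y. Define Q_{i,j} = (1/Δv_x)[f_{i+1/2,j}(v_{x,i+1/2} − ũ_x) − f_{i−1/2,j}(v_{x,i−1/2} − ũ_x)]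 + (T̃/Δv_x²)(f_{i+1,j} − 2f_{i,j} + f_{i−1,j}) + (1/Δv_y)[f_{i,j+1/2}(v_{y,j+1/2} − ũ_y) − f_{i,j−1/2}(v_{y,j−1/2} − ũ_y)] + (T̃/Δv_y²)(f_{i,j+1} − 2f_{i,j} + f_{i,j−1}). Then ∑_{i,j} Q_{i,j}Δv_xΔv_y = 0, ∑_{i,j} v_{x,i}Q_{i,j}Δv_xΔv_y = 0, ∑_{i,j} v_{y,j}Q_{i,j}Δv_xΔv_y = 0, and ∑_{i,j} ((v_{x,i}² + v_{y,j}²)/2)·Q_{i,j}Δv_xΔv_y = 0. -/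
noncomputable section

/-- Grid points in the `x`-velocity direction: `v_{x,i} = i·Δv_x`. -/
def vgx (Δvx : ℝ) (i : ℤ) : ℝ := i * Δvx

/-- Grid points in the `y`-velocity direction: `v_{y,j} = j·Δv_y`. -/
def vgy (Δvy : ℝ) (j : ℤ) : ℝ := j * Δvy

/-- Half-grid point `v_{x,i+1/2}`. -/
def vgxh (Δvx : ℝ) (i : ℤ) : ℝ := (vgx Δvx i + vgx Δvx (i + 1)) / 2

/-- Half-grid point `v_{y,j+1/2}`. -/
def vgyh (Δvy : ℝ) (j : ℤ) : ℝ := (vgy Δvy j + vgy Δvy (j + 1)) / 2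

/-- Half-grid average `f_{i+1/2,j} = (f_{i+1,j} + f_{i,j})/2`. -/
def fhx (f : ℤ → ℤ → ℝ) (i j : ℤ) : ℝ := (f (i + 1) j + f i j) / 2

/-- Half-grid average `f_{i,j+1/2} = (f_{i,j+1} + f_{i,j})/2`. -/
def fhy (f : ℤ → ℤ → ℝ) (i j : ℤ) : ℝ := (f i (j + 1) + f i j) / 2

/-- Two-dimensional second-order discrete Fokker–Planck operator. -/
def Q2two (Δvx Δvy ux uy Tt : ℝ) (f : ℤ → ℤ → ℝ) (i j : ℤ) : ℝ :=
  (1 / Δvx) * (fhx f i j * (vgxh Δvx i - ux) - fhx f (i - 1) j * (vgxh Δvx (i - 1) - ux))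
    + (Tt / Δvx ^ 2) * (f (i + 1) j - 2 * f i j + f (i - 1) j)
    + (1 / Δvy) * (fhy f i j * (vgyh Δvy j - uy) - fhy f i (j - 1) * (vgyh Δvy (j - 1) - uy))
    + (Tt / Δvy ^ 2) * (f i (j + 1) - 2 * f i j + f i (j - 1))

theorem aux_shift (f : ℤ → ℤ → ℝ)
    (hf : (Function.support fun p : ℤ × ℤ => f p.1 p.2).Finite) (w : ℤ → ℤ → ℝ) (a b : ℤ) :
    HasSum (fun p : ℤ × ℤ => w p.1 p.2 * f (p.1 + a) (p.2 + b))
      (∑ p ∈ hf.toFinset, w (p.1 - a) (p.2 - b) * f p.1 p.2) := by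
  have h : HasSum (fun p : ℤ × ℤ => w (p.1 - a) (p.2 - b) * f p.1 p.2)
      (∑ p ∈ hf.toFinset, w (p.1 - a) (p.2 - b) * f p.1 p.2) := by
    apply hasSum_sum_of_ne_finset_zero
    intro p hp
    have : f p.1 p.2 = 0 := by simpa using hp
    rw [this, mul_zero]
  have h2 := ((Equiv.addRight ((a, b) : ℤ × ℤ)).hasSum_iff).mpr h
  convert h2 using 2 with p
  simp [Function.comp]

theorem aux_five (f : ℤ → ℤ → ℝ)
    (hf : (Function.support fun p : ℤ × ℤ => f p.1 p.2).Finite)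
    (w0 w1 w2 w3 w4 : ℤ → ℤ → ℝ) (F : ℤ × ℤ → ℝ) (A B C D E : ℝ)
    (hF : ∀ i j : ℤ, F (i, j) = w0 i j * f i j + w1 i j * f (i + 1) j + w2 i j * f (i - 1) j
      + w3 i j * f i (j + 1) + w4 i j * f i (j - 1))
    (hw : ∀ i j : ℤ, w0 i j + w1 (i - 1) j + w2 (i + 1) j + w3 i (j - 1) + w4 i (j + 1)
      = A + B * i + C * i ^ 2 + D * j + E * j ^ 2) :
    ∑' p, F p = A * (∑ p ∈ hf.toFinset, f p.1 p.2)
      + B * (∑ p ∈ hf.toFinset, (p.1 : ℝ) * f p.1 p.2)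
      + C * (∑ p ∈ hf.toFinset, (p.1 : ℝ) ^ 2 * f p.1 p.2)
      + D * (∑ p ∈ hf.toFinset, (p.2 : ℝ) * f p.1 p.2)
      + E * (∑ p ∈ hf.toFinset, (p.2 : ℝ) ^ 2 * f p.1 p.2) := by
  have h := ((((aux_shift f hf w0 0 0).add (aux_shift f hf w1 1 0)).add
    (aux_shift f hf w2 (-1) 0)).add (aux_shift f hf w3 0 1)).add (aux_shift f hf w4 0 (-1))
  have h2 := h.tsum_eq
  refine Eq.trans (tsum_congr ?_) (h2.trans ?_)
  · rintro ⟨i, j⟩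
    simp [hF, sub_eq_add_neg]
  simp only [Finset.mul_sum, ← Finset.sum_add_distrib]
  refine Finset.sum_congr rfl fun p _ => ?_
  have := hw p.1 p.2
  simp only [sub_zero, sub_neg_eq_add]
  linear_combination f p.1 p.2 * this

theorem aux_Q (Δvx Δvy ux uy Tt : ℝ) (hx : Δvx ≠ 0) (hy : Δvy ≠ 0) (f : ℤ → ℤ → ℝ)
    (hf : (Function.support fun p : ℤ × ℤ => f p.1 p.2).Finite)
    (W : ℤ → ℤ → ℝ) (F : ℤ × ℤ → ℝ) (A B C D E : ℝ)
    (hF : ∀ i j : ℤ, F (i, j) = W i j * Q2two Δvx Δvy ux uy Tt f i j * Δvx * Δvy)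
    (hw : ∀ i j : ℤ, (W i j * (1 - 2 * Tt / Δvx ^ 2 - 2 * Tt / Δvy ^ 2)
      + W (i - 1) j * (((i - 1 / 2) * Δvx - ux) / (2 * Δvx) + Tt / Δvx ^ 2)
      + W (i + 1) j * (-((i + 1 / 2) * Δvx - ux) / (2 * Δvx) + Tt / Δvx ^ 2)
      + W i (j - 1) * (((j - 1 / 2) * Δvy - uy) / (2 * Δvy) + Tt / Δvy ^ 2)
      + W i (j + 1) * (-((j + 1 / 2) * Δvy - uy) / (2 * Δvy) + Tt / Δvy ^ 2)) * Δvx * Δvy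
      = A + B * i + C * i ^ 2 + D * j + E * j ^ 2) :
    ∑' p, F p = A * (∑ p ∈ hf.toFinset, f p.1 p.2)
      + B * (∑ p ∈ hf.toFinset, (p.1 : ℝ) * f p.1 p.2)
      + C * (∑ p ∈ hf.toFinset, (p.1 : ℝ) ^ 2 * f p.1 p.2)
      + D * (∑ p ∈ hf.toFinset, (p.2 : ℝ) * f p.1 p.2)
      + E * (∑ p ∈ hf.toFinset, (p.2 : ℝ) ^ 2 * f p.1 p.2) := by
  refine aux_five f hf
    (fun i j => W i j * (1 - 2 * Tt / Δvx ^ 2 - 2 * Tt / Δvy ^ 2) * Δvx * Δvy)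
    (fun i j => W i j * (((i + 1 / 2) * Δvx - ux) / (2 * Δvx) + Tt / Δvx ^ 2) * Δvx * Δvy)
    (fun i j => W i j * (-((i - 1 / 2) * Δvx - ux) / (2 * Δvx) + Tt / Δvx ^ 2) * Δvx * Δvy)
    (fun i j => W i j * (((j + 1 / 2) * Δvy - uy) / (2 * Δvy) + Tt / Δvy ^ 2) * Δvx * Δvy)
    (fun i j => W i j * (-((j - 1 / 2) * Δvy - uy) / (2 * Δvy) + Tt / Δvy ^ 2) * Δvx * Δvy)
    F A B C D E ?_ ?_
  · intro i j
    rw [hF]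
    simp only [Q2two, fhx, fhy, vgxh, vgyh, vgx, vgy, sub_add_cancel]
    push_cast
    field_simp
    ring
  · intro i j
    rw [← hw i j]
    push_cast
    ring

/-- Conservation of mass, both momentum components and kinetic energy for the
two-dimensional second-order discretization of the Fokker–Planck operator. -/
theorem stmt15 (Δvx Δvy n ux uy Tt : ℝ) (hΔvx : 0 < Δvx) (hΔvy : 0 < Δvy)
    (f : ℤ → ℤ → ℝ)
    (hf : (Function.support fun p : ℤ × ℤ => f p.1 p.2).Finite)
    (hn : n = ∑' p : ℤ × ℤ, f p.1 p.2 * Δvx * Δvy)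
    (hux : n * ux = ∑' p : ℤ × ℤ, vgxh Δvx p.1 * fhx f p.1 p.2 * Δvx * Δvy)
    (huy : n * uy = ∑' p : ℤ × ℤ, vgyh Δvy p.2 * fhy f p.1 p.2 * Δvx * Δvy)
    (hT : 2 * n * Tt = (∑' p : ℤ × ℤ, (vgxh Δvx p.1 - ux) ^ 2 * fhx f p.1 p.2 * Δvx * Δvy)
        + ∑' p : ℤ × ℤ, (vgyh Δvy p.2 - uy) ^ 2 * fhy f p.1 p.2 * Δvx * Δvy) :
    (∑' p : ℤ × ℤ, Q2two Δvx Δvy ux uy Tt f p.1 p.2 * Δvx * Δvy = 0) ∧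
    (∑' p : ℤ × ℤ, vgx Δvx p.1 * Q2two Δvx Δvy ux uy Tt f p.1 p.2 * Δvx * Δvy = 0) ∧
    (∑' p : ℤ × ℤ, vgy Δvy p.2 * Q2two Δvx Δvy ux uy Tt f p.1 p.2 * Δvx * Δvy = 0) ∧
    (∑' p : ℤ × ℤ, ((vgx Δvx p.1 ^ 2 + vgy Δvy p.2 ^ 2) / 2)
        * Q2two Δvx Δvy ux uy Tt f p.1 p.2 * Δvx * Δvy = 0) := by
  have hx := hΔvx.ne'
  have hy := hΔvy.ne'
  rw [aux_five f hf (fun _ _ => Δvx * Δvy) 0 0 0 0 _ (Δvx * Δvy) 0 0 0 0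
    (by intro i j; simp; ring) (by intro i j; simp)] at hn
  rw [aux_five f hf (fun i _ => (i + 1 / 2) * Δvx / 2 * Δvx * Δvy)
    (fun i _ => (i + 1 / 2) * Δvx / 2 * Δvx * Δvy) 0 0 0 _ 0 (Δvx * Δvx * Δvy) 0 0 0
    (by intro i j; simp [vgxh, fhx, vgx]; ring) (by intro i j; simp; ring)] at hux
  rw [aux_five f hf (fun _ j => (j + 1 / 2) * Δvy / 2 * Δvx * Δvy) 0 0
    (fun _ j => (j + 1 / 2) * Δvy / 2 * Δvx * Δvy) 0 _ 0 0 0 (Δvy * Δvx * Δvy) 0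
    (by intro i j; simp [vgyh, fhy, vgy]; ring) (by intro i j; simp; ring)] at huy
  rw [aux_five f hf (fun i _ => ((i + 1 / 2) * Δvx - ux) ^ 2 / 2 * Δvx * Δvy)
    (fun i _ => ((i + 1 / 2) * Δvx - ux) ^ 2 / 2 * Δvx * Δvy) 0 0 0 _
    ((Δvx ^ 2 / 4 + ux ^ 2) * Δvx * Δvy) (-2 * ux * Δvx * Δvx * Δvy) (Δvx ^ 2 * Δvx * Δvy) 0 0
    (by intro i j; simp [vgxh, fhx, vgx]; ring) (by intro i j; simp; ring),
    aux_five f hf (fun _ j => ((j + 1 / 2) * Δvy - uy) ^ 2 / 2 * Δvx * Δvy) 0 0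
    (fun _ j => ((j + 1 / 2) * Δvy - uy) ^ 2 / 2 * Δvx * Δvy) 0 _
    ((Δvy ^ 2 / 4 + uy ^ 2) * Δvx * Δvy) 0 0 (-2 * uy * Δvy * Δvx * Δvy) (Δvy ^ 2 * Δvx * Δvy)
    (by intro i j; simp [vgyh, fhy, vgy]; ring) (by intro i j; simp; ring)] at hT
  refine ⟨?_, ?_, ?_, ?_⟩
  · rw [aux_Q Δvx Δvy ux uy Tt hx hy f hf (fun _ _ => 1) _ 0 0 0 0 0
      (by intro i j; simp) (by intro i j; field_simp; ring)]
    ring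
  · rw [aux_Q Δvx Δvy ux uy Tt hx hy f hf (fun i _ => i * Δvx) _
      (ux * Δvx * Δvy) (-Δvx * Δvx * Δvy) 0 0 0
      (by intro i j; simp [vgx]) (by intro i j; push_cast; field_simp; ring)]
    linear_combination hux - ux * hn
  · rw [aux_Q Δvx Δvy ux uy Tt hx hy f hf (fun _ j => j * Δvy) _
      (uy * Δvx * Δvy) 0 0 (-Δvy * Δvx * Δvy) 0
      (by intro i j; simp [vgy]) (by intro i j; push_cast; field_simp; ring)]
    linear_combination huy - uy * hn
  · rw [aux_Q Δvx Δvy ux uy Tt hx hy f hf (fun i j => ((i * Δvx) ^ 2 + (j * Δvy) ^ 2) / 2) _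
      ((2 * Tt - Δvx ^ 2 / 4 - Δvy ^ 2 / 4) * Δvx * Δvy) (ux * Δvx * Δvx * Δvy)
      (-Δvx ^ 2 * Δvx * Δvy) (uy * Δvy * Δvx * Δvy) (-Δvy ^ 2 * Δvx * Δvy)
      (by intro i j; simp [vgx, vgy]) (by intro i j; push_cast; field_simp; ring)]
    linear_combination hT - 2 * Tt * hn + ux * (hux - ux * hn) + uy * (huy - uy * hn)

end
end

section
/- Let g : ℝ → ℝ be five times continuously differentiable and fix v ∈ ℝ. Then there exist constants C > 0 and δ > 0 such that for all 0 < h < δ, |(g(v − h) − 27g(v) + 27g(v + h) − g(v + 2h))/(24h) − g'(v + h/2)| ≤ C·h⁴. -/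
theorem stmt17_aux (f : ℝ → ℝ) (n : ℕ) (hf : ContDiff ℝ n f) (v : ℝ) :
    ∃ δ > (0:ℝ), ∀ x : ℝ, |x| < δ →
      |f (v + x) - taylorWithinEval f n Set.univ v (v + x)| ≤ |x| ^ n := by
  have h := (taylor_isLittleO_univ (x₀ := v) hf).bound (one_pos)
  obtain ⟨δ, hδ, H⟩ := Metric.eventually_nhds_iff.1 h
  refine ⟨δ, hδ, fun x hx => ?_⟩
  have := H (y := v + x) (by simpa [Real.dist_eq] using hx)
  simpa using this

/-- Fourth-order accuracy of the four-point finite difference approximation of the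
first derivative at the half-grid point:
`(g(v−h) − 27g(v) + 27g(v+h) − g(v+2h))/(24h) = g'(v + h/2) + O(h⁴)`. -/
theorem stmt17 (g : ℝ → ℝ) (hg : ContDiff ℝ 5 g) (v : ℝ) :
    ∃ C > (0:ℝ), ∃ δ > (0:ℝ), ∀ h : ℝ, 0 < h → h < δ →
      |(g (v - h) - 27 * g v + 27 * g (v + h) - g (v + 2 * h)) / (24 * h)
          - deriv g (v + h / 2)| ≤ C * h ^ 4 := by
  have hd : ContDiff ℝ (4:ℕ) (deriv g) := by
    have h5 : ContDiff ℝ (4 + 1) g := by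
      have : (4 + 1 : WithTop ℕ∞) = 5 := by norm_num
      rwa [this]
    exact_mod_cast (contDiff_succ_iff_deriv.1 h5).2.2
  obtain ⟨δ₁, hδ₁, H₁⟩ := stmt17_aux g 5 (by exact_mod_cast hg) v
  obtain ⟨δ₂, hδ₂, H₂⟩ := stmt17_aux (deriv g) 4 hd v
  simp only [taylorWithinEval_succ, taylor_within_zero_eval, iteratedDerivWithin_univ,
    ← iteratedDeriv_succ', add_sub_cancel_left, smul_eq_mul] at H₁ H₂
  norm_num [Nat.factorial] at H₁ H₂
  have e1 : deriv g v = iteratedDeriv 1 g v := by simp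
  rw [e1] at H₁ H₂
  generalize iteratedDeriv 1 g v = a1 at *
  generalize iteratedDeriv 2 g v = a2 at *
  generalize iteratedDeriv 3 g v = a3 at *
  generalize iteratedDeriv 4 g v = a4 at *
  generalize iteratedDeriv 5 g v = a5 at *
  refine ⟨|a5| + 3, by positivity, min (δ₁ / 2) δ₂, by positivity, fun h h0 hh => ?_⟩
  have hh1 := lt_of_lt_of_le hh (min_le_left _ _)
  have hh2 := lt_of_lt_of_le hh (min_le_right _ _)
  have A := H₁ (-h) (by rw [abs_neg, abs_of_pos h0]; linarith)
  have B := H₁ h (by rw [abs_of_pos h0]; linarith)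
  have D := H₁ (2 * h) (by rw [abs_of_pos (by positivity)]; linarith)
  have E := H₂ (h / 2) (by rw [abs_of_pos (by positivity)]; linarith)
  rw [abs_neg, abs_of_pos h0, ← sub_eq_add_neg] at A
  rw [abs_of_pos h0] at B
  rw [abs_of_pos (show 0 < 2 * h by positivity)] at D
  rw [abs_of_pos (show 0 < h / 2 by positivity)] at E
  have h4 : 0 < h ^ 4 := by positivity
  have key : |(g (v - h) - 27 * g v + 27 * g (v + h) - g (v + 2 * h))
          - 24 * h * deriv g (v + h / 2)| ≤ 24 * h * ((|a5| + 3) * h ^ 4) := by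
    have E1 := mul_le_mul_of_nonneg_left (abs_le.1 E).1 h0.le
    have E2 := mul_le_mul_of_nonneg_left (abs_le.1 E).2 h0.le
    have p1 : a5 * h ^ 5 ≤ |a5| * h ^ 5 := by gcongr; exact le_abs_self _
    have p2 : -(|a5| * h ^ 5) ≤ a5 * h ^ 5 := by
      rw [← neg_mul]; gcongr; exact neg_abs_le _
    have p3 : 0 < h ^ 5 := by positivity
    have A1 := abs_le.1 A
    have B1 := abs_le.1 B
    have D1 := abs_le.1 D
    rw [abs_le]
    constructor <;> linarith [A1.1, A1.2, B1.1, B1.2, D1.1, D1.2, E1, E2]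
  have e : (g (v - h) - 27 * g v + 27 * g (v + h) - g (v + 2 * h)) / (24 * h)
          - deriv g (v + h / 2) = ((g (v - h) - 27 * g v + 27 * g (v + h) - g (v + 2 * h))
          - 24 * h * deriv g (v + h / 2)) / (24 * h) := by
    field_simp
  rw [e, abs_div, abs_of_pos (show 0 < 24 * h by positivity), div_le_iff₀ (by positivity)]
  linarith
end
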